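/- arXiv:1805.04568 — 4 statements merged into one kernel-verified Lean document; each statement's English description precedes it below -/
import Mathlib

section
/- Let R be a commutative Noetherian local ring, L and M finitely generated R-modules. If M is maximal Cohen-Macaulay (i.e. depth_R(M) = dim R) and L has finite projective dimension, then Tor_i^R(L, M) = 0 for all i \geq 1. -/
open CategoryTheory IsLocalRing

/-- The depth of a module over a local ring: the supremum of lengths of regular
sequences on `M` consisting of elements of the maximal ideal. -/
noncomputable def moduleDepth (R : Type) [CommRing R] [IsLocalRing R]
    (M : Type) [AddCommGroup M] [Module R M] : WithBot (WithTop ℕ) :=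
  sSup {n : WithBot (WithTop ℕ) | ∃ rs : List R,
    (∀ r ∈ rs, r ∈ maximalIdeal R) ∧ RingTheory.Sequence.IsRegular M rs ∧
    (rs.length : WithBot (WithTop ℕ)) = n}

/-- `L` has finite projective dimension: for some `n`, `Ext^i(L, -) = 0` for all `i > n`. -/
def HasFinitePD (R : Type) [CommRing R] (L : Type) [AddCommGroup L] [Module R L] : Prop :=
  ∃ n : ℕ, ∀ (Y : ModuleCat.{0} R) (i : ℕ), n < i →
    Subsingleton (((_root_.Ext R (ModuleCat.{0} R) i).obj
      (Opposite.op (ModuleCat.of R L))).obj Y)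

/-!
Write `T_j = Tor_j(L, -)` and `d = dim R`. Finite projective dimension makes `T_j` vanish for large
`j`, and then every prime `p` in the support of some `T_j(A)`, with `A` finitely generated,
satisfies `j ≤ height p`. Indeed, `T_j(R ⧸ p)` detects whether `T_j` vanishes at `p`. Starting from
`R`, prime avoidance produces after at most `height p` steps a module of which `p` is an associated
prime and whose `T_j` vanish at `p` for `j > height p`; as `R ⧸ p` embeds in this module, descending
induction on `j` applies.

If `T_i(M) ≠ 0` with `i ≥ 1` maximal, choose an associated prime `p` of `T_i(M)`. By Ischebeck's
theorem an `M`-regular sequence of length `d` in the maximal ideal yields one of length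
`d - coheight p` in `p`. Cutting `M` by it raises the top degree by one at every step and keeps `p`
associated, so `i + (d - coheight p) ≤ height p`, which contradicts `height p + coheight p ≤ d`.

Mathlib's `Tor` resolves the second variable and `Tor'` the first. The argument runs with `Tor'`;
vanishing of all the `Tor'_j(L, M)` with `j ≥ 1` passes to `Tor` through the syzygies of `M`.
-/

section

universe u

open MonoidalCategory
open scoped Pointwise

/-! ### Left derived functors -/

section LeftDerived

variable {C D : Type*} [Category* C] [Category* D] [Abelian C] [Abelian D]
  [HasProjectiveResolutions C] {F G : C ⥤ D} [F.Additive] [G.Additive]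

lemma leftDerived_app_comp_isoLeftDerivedObj_hom (α : F ⟶ G) {X : C}
    (P : ProjectiveResolution X) (n : ℕ) :
    (NatTrans.leftDerived α n).app X ≫ (P.isoLeftDerivedObj G n).hom =
      (P.isoLeftDerivedObj F n).hom ≫ (HomologicalComplex.homologyFunctor D _ n).map
        ((NatTrans.mapHomologicalComplex α _).app P.complex) := by
  rw [P.leftDerived_app_eq, Category.assoc, Category.assoc, Iso.inv_hom_id, Category.comp_id]

lemma leftDerived_zero_app_comp_fromLeftDerivedZero_app (α : F ⟶ G) (X : C) :
    (NatTrans.leftDerived α 0).app X ≫ G.fromLeftDerivedZero.app X =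
      F.fromLeftDerivedZero.app X ≫ α.app X := by
  let P := projectiveResolution X
  let φ := (NatTrans.mapHomologicalComplex α _).app P.complex
  have h_opcycles : HomologicalComplex.opcyclesMap φ 0 ≫ P.fromLeftDerivedZero' G =
      P.fromLeftDerivedZero' F ≫ α.app X := by
    rw [← cancel_epi (HomologicalComplex.pOpcycles _ _),
      HomologicalComplex.p_opcyclesMap_assoc, P.pOpcycles_comp_fromLeftDerivedZero',
      P.pOpcycles_comp_fromLeftDerivedZero'_assoc]
    exact (α.naturality (P.π.f 0)).symm
  have h_homology : HomologicalComplex.homologyMap φ 0 ≫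
        HomologicalComplex.homologyι _ 0 ≫ P.fromLeftDerivedZero' G =
      HomologicalComplex.homologyι _ 0 ≫ P.fromLeftDerivedZero' F ≫ α.app X := by
    rw [HomologicalComplex.homologyι_naturality_assoc, h_opcycles]
  rw [P.fromLeftDerivedZero_eq, P.fromLeftDerivedZero_eq,
    reassoc_of% leftDerived_app_comp_isoLeftDerivedObj_hom α P 0, Category.assoc]
  exact congrArg ((P.isoLeftDerivedObj F 0).hom ≫ ·)
    (h_homology.trans (Category.assoc _ _ _).symm)

end LeftDerived

instance homologyFunctor_linear {R C ι : Type*} [Semiring R] [Category* C] [Preadditive C]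
    [Linear R C] [CategoryWithHomology C] (c : ComplexShape ι) (i : ι) :
    (HomologicalComplex.homologyFunctor C c i).Linear R where
  map_smul f x := ShortComplex.homologyMap_smul
    ((HomologicalComplex.shortComplexFunctor C c i).map f) x

/-! ### Exact sequences of modules -/

section Exact

variable {R : Type*} [CommRing R] {A B C : Type*} [AddCommGroup A] [Module R A] [AddCommGroup B]
  [Module R B] [AddCommGroup C] [Module R C] {f : A →ₗ[R] B} {g : B →ₗ[R] C}

lemma injective_of_exact_of_subsingleton (h : Function.Exact f g) [Subsingleton A] :
    Function.Injective g := by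
  rw [← LinearMap.ker_eq_bot, h.linearMap_ker_eq, LinearMap.range_eq_bot]
  exact Subsingleton.elim f 0

lemma subsingleton_of_exact (h : Function.Exact f g) [Subsingleton A] [Subsingleton C] :
    Subsingleton B :=
  (injective_of_exact_of_subsingleton h).subsingleton

lemma support_subset_union_of_exact (h : Function.Exact f g) :
    Module.support R B ⊆ Module.support R A ∪ Module.support R C := by
  intro p hp
  by_contra! hAC
  rw [Set.mem_union, not_or, Module.notMem_support_iff', Module.notMem_support_iff'] at hAC
  refine Module.notMem_support_iff'.2 (fun b ↦ ?_) hp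
  obtain ⟨r, hr, hrb⟩ := hAC.2 (g b)
  obtain ⟨a, ha⟩ := (h (r • b)).1 (by rw [map_smul, hrb])
  obtain ⟨s, hs, hsa⟩ := hAC.1 a
  exact ⟨s * r, fun hsr ↦ (p.2.mem_or_mem hsr).elim hs hr, by
    rw [mul_smul, ← ha, ← map_smul, hsa, map_zero]⟩

lemma rTensor_exact_of_comp_eq_mkQ (hgf : g ∘ₗ f = 0) {s : C →ₗ[R] B ⧸ LinearMap.range f}
    (hs : s ∘ₗ g = (LinearMap.range f).mkQ) (N : Type*) [AddCommGroup N] [Module R N] :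
    Function.Exact (f.rTensor N) (g.rTensor N) := by
  refine LinearMap.exact_iff.2 (le_antisymm (fun z hz ↦ ?_) ?_)
  · have hmkQ := rTensor_exact N (LinearMap.exact_map_mkQ_range f) (Submodule.mkQ_surjective _)
    refine (hmkQ z).1 ?_
    rw [← hs, LinearMap.rTensor_comp_apply, LinearMap.mem_ker.1 hz, map_zero]
  · rw [LinearMap.range_le_ker_iff, ← LinearMap.rTensor_comp, hgf, LinearMap.rTensor_zero]

lemma lTensor_exact_of_lTensor_range_subtype_injective (hfg : Function.Exact f g)
    {N : Type*} [AddCommGroup N] [Module R N]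
    (hg : Function.Injective ((LinearMap.range g).subtype.lTensor N)) :
    Function.Exact (f.lTensor N) (g.lTensor N) := by
  have hsurj : Function.Exact f g.rangeRestrict :=
    fun x ↦ Subtype.ext_iff.trans (hfg x)
  have h := lTensor_exact N hsurj g.surjective_rangeRestrict
  rw [← LinearMap.subtype_comp_codRestrict g (LinearMap.range g) g.mem_range_self,
    LinearMap.lTensor_comp]
  exact h.comp_injective _ hg (map_zero _)

end Exact

/-! ### Primes, support and associated primes -/

lemma wellFoundedGT_primeSpectrum (R : Type*) [CommRing R] [IsNoetherianRing R] :
    WellFoundedGT (PrimeSpectrum R) :=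
  StrictMono.wellFoundedGT (f := PrimeSpectrum.asIdeal) fun _ _ h ↦ h

section Primes

variable {R : Type*} [CommRing R]

lemma notMem_support_of_subsingleton {A : Type*} [AddCommGroup A] [Module R A] [Subsingleton A]
    (p : PrimeSpectrum R) : p ∉ Module.support R A := by
  rw [Module.support_eq_empty]
  exact Set.notMem_empty p

lemma isSMulRegular_quotient_of_notMem (q : PrimeSpectrum R) {x : R} (hx : x ∉ q.asIdeal) :
    IsSMulRegular (R ⧸ q.asIdeal) x :=
  (isSMulRegular_quotient_iff_mem_of_smul_mem q.asIdeal x).2 fun _ h ↦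
    (q.2.mem_or_mem h).resolve_left hx

lemma lt_of_mem_support_quotSMulTop_quotient {q q' : PrimeSpectrum R} {x : R}
    (hx : x ∉ q.asIdeal) (hq' : q' ∈ Module.support R (QuotSMulTop x (R ⧸ q.asIdeal))) :
    q < q' := by
  rw [Module.support_quotSMulTop, Module.support_eq_zeroLocus, Ideal.annihilator_quotient] at hq'
  exact lt_of_le_of_ne hq'.1 (by rintro rfl; exact hx (hq'.2 rfl))

lemma notMem_support_of_exact_smul {A C : Type*} [AddCommGroup A] [Module R A] [Module.Finite R A]
    [AddCommGroup C] [Module R C] {g : A →ₗ[R] C} {x : R}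
    (h : Function.Exact (LinearMap.lsmul R A x) g) {p : PrimeSpectrum R} (hx : x ∈ p.asIdeal)
    (hC : p ∉ Module.support R C) : p ∉ Module.support R A := by
  intro hA
  have h_ker : LinearMap.ker g = x • (⊤ : Submodule R A) := by
    rw [h.linearMap_ker_eq, LinearMap.range_eq_map]; rfl
  have h_injective : Function.Injective ((x • (⊤ : Submodule R A)).liftQ g h_ker.ge) :=
    LinearMap.ker_eq_bot.1 (Submodule.ker_liftQ_eq_bot' _ _ h_ker.symm)
  refine hC (Module.support_subset_of_injective _ h_injective ?_)
  rw [Module.support_quotSMulTop]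
  exact ⟨hA, Set.singleton_subset_iff.2 hx⟩

variable {A : Type*} [AddCommGroup A] [Module R A] [Module.Finite R A] {p : PrimeSpectrum R}
  {x y : R}

lemma mem_support_of_mem_associatedPrimes (hp : p.asIdeal ∈ associatedPrimes R A) :
    p ∈ Module.support R A := by
  rw [Module.mem_support_iff_of_finite, ← Submodule.annihilator_top]
  exact hp.annihilator_le

variable [IsNoetherianRing R]

lemma exists_mem_forall_notMem_associatedPrimes_le (hp : p.asIdeal ∉ associatedPrimes R A) :
    ∃ y ∈ p.asIdeal, ∀ q ∈ associatedPrimes R A, q ≤ p.asIdeal → y ∉ q := by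
  have h_finite : {q ∈ associatedPrimes R A | q ≤ p.asIdeal}.Finite :=
    (associatedPrimes.finite R A).subset fun _ h ↦ h.1
  by_contra! h
  obtain ⟨q, hq, hpq⟩ := (Ideal.subset_union_prime_finite h_finite (f := id) ⊥ ⊥
    fun q hq _ _ ↦ hq.1.isPrime).1 fun y hy ↦ by
      obtain ⟨q, hq, hqp, hyq⟩ := h y hy
      exact Set.mem_biUnion (show q ∈ {q ∈ _ | _} from ⟨hq, hqp⟩) hyq
  exact hp (hpq.antisymm hq.2 ▸ hq.1)

lemma exists_associatedPrimes_le (hp : p ∈ Module.support R A) :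
    ∃ q ≤ p, q.asIdeal ∈ associatedPrimes R A := by
  rw [Module.mem_support_iff_of_finite] at hp
  obtain ⟨q, hq, hqp⟩ := Ideal.exists_minimalPrimes_le hp
  exact ⟨⟨q, hq.1.1⟩, hqp,
    Module.associatedPrimes.minimalPrimes_annihilator_subset_associatedPrimes R A hq⟩

lemma notMem_support_ker_lsmul (hy : ∀ q ∈ associatedPrimes R A, q ≤ p.asIdeal → y ∉ q) :
    p ∉ Module.support R (LinearMap.ker (LinearMap.lsmul R A y)) := by
  intro hp
  obtain ⟨q, hqp, hq⟩ := exists_associatedPrimes_le hp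
  refine hy _ (associatedPrimes.subset_of_injective (Submodule.injective_subtype _) hq) hqp
    (IsAssociatedPrime.annihilator_le hq ?_)
  exact Submodule.mem_annihilator.2 fun a _ ↦ Subtype.ext a.2

lemma height_add_one_le_of_mem_support_quotSMulTop
    (hy : ∀ q ∈ associatedPrimes R A, q ≤ p.asIdeal → y ∉ q) {k : ℕ∞}
    (hk : ∀ q ∈ Module.support R A, q ≤ p → k ≤ Order.height q) {q : PrimeSpectrum R}
    (hq : q ∈ Module.support R (QuotSMulTop y A)) (hqp : q ≤ p) : k + 1 ≤ Order.height q := by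
  rw [Module.support_quotSMulTop] at hq
  obtain ⟨q', hq'q, hq'⟩ := exists_associatedPrimes_le hq.1
  have h_ne : q' ≠ q := by rintro rfl; exact hy _ hq' hqp (hq.2 rfl)
  calc k + 1 ≤ Order.height q' + 1 := by
        gcongr
        exact hk q' (mem_support_of_mem_associatedPrimes hq') (hq'q.trans hqp)
    _ ≤ Order.height q := Order.height_add_one_le (lt_of_le_of_ne hq'q h_ne)

lemma mem_associatedPrimes_of_exact_smul {A C : Type*} [AddCommGroup A] [Module R A]
    [AddCommGroup C] [Module R C] {δ : C →ₗ[R] A} (hδ : Function.Injective δ)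
    (h_exact : Function.Exact δ (LinearMap.lsmul R A x)) {p : Ideal R} (hxp : x ∈ p)
    (hp : p ∈ associatedPrimes R A) : p ∈ associatedPrimes R C := by
  obtain ⟨hp_prime, t, rfl⟩ := isAssociatedPrime_iff.1 hp
  obtain ⟨s, rfl⟩ := (h_exact t).1 (Submodule.mem_colon_singleton.1 hxp)
  refine isAssociatedPrime_iff.2 ⟨hp_prime, s, ?_⟩
  ext a
  simp only [Submodule.mem_colon_singleton, Submodule.mem_bot, ← map_smul, map_eq_zero_iff δ hδ]

end Primes

variable {R : Type u} [CommRing R]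

lemma prime_quotient_induction [IsNoetherianRing R] {P : ModuleCat.{u} R → Prop}
    (subsingleton : ∀ N : ModuleCat.{u} R, Subsingleton N → P N)
    (shortExact : ∀ S : ShortComplex (ModuleCat.{u} R), S.ShortExact → P S.X₁ → P S.X₃ → P S.X₂)
    (N : Type u) [AddCommGroup N] [Module R N] [hN : Module.Finite R N]
    (quotient : ∀ q ∈ Module.support R N, P (.of R (R ⧸ q.asIdeal))) : P (.of R N) := by
  induction hN using IsNoetherianRing.induction_on_isQuotientEquivQuotientPrime R with
  | subsingleton N => exact subsingleton _ inferInstance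
  | quotient N q e =>
    have hq : q ∈ Module.support R N := by
      rw [e.support_eq, Module.mem_support_iff_of_finite, Ideal.annihilator_quotient]
    have h_exact : Function.Exact e.symm.toLinearMap (0 : N →ₗ[R] PUnit.{u + 1}) :=
      (e.symm.toLinearMap.exact_zero_iff_surjective _).2 e.symm.surjective
    exact shortExact _ (ModuleCat.shortComplex_shortExact
      (ModuleCat.shortComplexOfCompEqZero _ _ h_exact.linearMap_comp_eq_zero) h_exact
      e.symm.injective (Function.surjective_to_subsingleton _)) (quotient q hq)
      (subsingleton _ (inferInstanceAs (Subsingleton PUnit)))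
  | exact N₁ N₂ N₃ f g hf hg hfg ih₁ ih₃ =>
    rw [Module.support_of_exact hfg hf hg] at quotient
    exact shortExact _ (ModuleCat.shortComplex_shortExact
      (ModuleCat.shortComplexOfCompEqZero f g hfg.linearMap_comp_eq_zero) hfg hf hg)
      (ih₁ fun q hq ↦ quotient q (.inl hq)) (ih₃ fun q hq ↦ quotient q (.inr hq))

/-! ### The functors `Tor_j(L, -)` -/

section TensorComplex

/-- The functor `N ↦ F ⊗ N` from modules to chain complexes. -/
noncomputable def tensorComplex (F : ChainComplex (ModuleCat.{u} R) ℕ) :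
    ModuleCat.{u} R ⥤ ChainComplex (ModuleCat.{u} R) ℕ where
  obj N := (((tensoringRight (ModuleCat.{u} R)).obj N).mapHomologicalComplex _).obj F
  map f := (NatTrans.mapHomologicalComplex ((tensoringRight (ModuleCat.{u} R)).map f) _).app F

variable (F : ChainComplex (ModuleCat.{u} R) ℕ)

instance : (tensorComplex F).Additive where
  map_add {N N' f g} := by
    ext i : 2
    exact LinearMap.lTensor_add (F.X i) f.hom g.hom

instance : (tensorComplex F).Linear R where
  map_smul {N N'} f x := by
    ext i : 2
    exact LinearMap.lTensor_smul (F.X i) x f.hom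

lemma tensorComplex_map_shortExact {F : ChainComplex (ModuleCat.{u} R) ℕ}
    (hF : ∀ i, Module.Flat R (F.X i)) {S : ShortComplex (ModuleCat.{u} R)}
    (hS : S.ShortExact) : (S.map (tensorComplex F)).ShortExact := by
  refine HomologicalComplex.shortExact_of_degreewise_shortExact _ fun i ↦ ?_
  have := hF i
  have hfg : Function.Exact S.f.hom S.g.hom :=
    (ShortComplex.ShortExact.moduleCat_exact_iff_function_exact _).1 hS.exact
  refine .mk' ?_ ?_ ?_
  · exact (ShortComplex.ShortExact.moduleCat_exact_iff_function_exact _).2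
      (Module.Flat.lTensor_exact (F.X i) hfg)
  · exact (ModuleCat.mono_iff_injective _).2
      (Module.Flat.lTensor_preserves_injective_linearMap _ hS.moduleCat_injective_f)
  · exact (ModuleCat.epi_iff_surjective _).2
      (LinearMap.lTensor_surjective _ hS.moduleCat_surjective_g)

end TensorComplex

/-- The functor `Tor_j(L, -)`, computed from projective resolutions of `L` (in contrast to Mathlib's
`Tor`, which resolves the other variable). -/
noncomputable abbrev torFunctor (L : ModuleCat.{u} R) (j : ℕ) : ModuleCat.{u} R ⥤ ModuleCat.{u} R :=
  (Tor' (ModuleCat.{u} R) j).obj L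

variable {L M : ModuleCat.{u} R}

/-- Every projective resolution `P` of `L` computes `Tor_j(L, N)` as `H_j(P ⊗ N)`, naturally
in `N`. -/
noncomputable def torFunctorIso (P : ProjectiveResolution L) (j : ℕ) :
    torFunctor L j ≅ tensorComplex P.complex ⋙ HomologicalComplex.homologyFunctor _ _ j :=
  NatIso.ofComponents (fun N ↦ P.isoLeftDerivedObj ((tensoringRight _).obj N) j)
    (fun _ ↦ leftDerived_app_comp_isoLeftDerivedObj_hom _ P j)

/-- `Tor_0(L, N) = L ⊗ N`, naturally in `N`. -/
noncomputable def torFunctorZeroIso (L : ModuleCat.{u} R) : torFunctor L 0 ≅ tensorLeft L :=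
  NatIso.ofComponents
    (fun N ↦ ((tensoringRight (ModuleCat.{u} R)).obj N).leftDerivedZeroIsoSelf.app L)
    (fun _ ↦ leftDerived_zero_app_comp_fromLeftDerivedZero_app _ _)

instance (j : ℕ) : (torFunctor L j).Additive :=
  Functor.additive_of_iso (torFunctorIso (projectiveResolution L) j).symm

instance (j : ℕ) : (torFunctor L j).Linear R :=
  Functor.linear_of_iso R (torFunctorIso (projectiveResolution L) j).symm

lemma flat_complex_X {L : ModuleCat.{u} R} (P : ProjectiveResolution L) (i : ℕ) :
    Module.Flat R (P.complex.X i) :=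
  have : Module.Projective R (P.complex.X i) :=
    (IsProjective.iff_projective (P.complex.X i)).2 (P.projective i)
  inferInstance

lemma function_exact_complex_d (P : ProjectiveResolution L) (j : ℕ) :
    Function.Exact (P.complex.d (j + 2) (j + 1)) (P.complex.d (j + 1) j) :=
  (ShortComplex.ShortExact.moduleCat_exact_iff_function_exact _).1 (P.exact_succ j)

lemma torFunctor_map_exact (j : ℕ) {S : ShortComplex (ModuleCat.{u} R)} (hS : S.ShortExact) :
    Function.Exact ((torFunctor L j).map S.f) ((torFunctor L j).map S.g) := by
  let P := projectiveResolution L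
  have h := (tensorComplex_map_shortExact (flat_complex_X P) hS).homology_exact₂ j
  exact (ShortComplex.ShortExact.moduleCat_exact_iff_function_exact _).1
    ((ShortComplex.exact_iff_of_iso (S.mapNatIso (torFunctorIso P j))).2 h)

lemma exists_torFunctor_connecting (j : ℕ) {S : ShortComplex (ModuleCat.{u} R)}
    (hS : S.ShortExact) :
    ∃ δ : (torFunctor L (j + 1)).obj S.X₃ →ₗ[R] (torFunctor L j).obj S.X₁,
      Function.Exact ((torFunctor L (j + 1)).map S.g) δ ∧
        Function.Exact δ ((torFunctor L j).map S.f) := by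
  let P := projectiveResolution L
  let e (i : ℕ) (N : ModuleCat.{u} R) :
      (torFunctor L i).obj N ≃ₗ[R] ((tensorComplex P.complex).obj N).homology i :=
    ((torFunctorIso P i).app N).toLinearEquiv
  have e_naturality (i : ℕ) {N N' : ModuleCat.{u} R} (f : N ⟶ N') :
      (HomologicalComplex.homologyMap ((tensorComplex P.complex).map f) i).hom ∘ₗ
          (e i N).toLinearMap = (e i N').toLinearMap ∘ₗ ((torFunctor L i).map f).hom :=
    (congrArg ModuleCat.Hom.hom ((torFunctorIso P i).hom.naturality f)).symm
  have h := tensorComplex_map_shortExact (flat_complex_X P) hS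
  let δ : ((tensorComplex P.complex).obj S.X₃).homology (j + 1) →ₗ[R]
      ((tensorComplex P.complex).obj S.X₁).homology j := (h.δ (j + 1) j rfl).hom
  have h₃ := (ShortComplex.ShortExact.moduleCat_exact_iff_function_exact _).1
    (h.homology_exact₃ (j + 1) j rfl)
  have h₁ := (ShortComplex.ShortExact.moduleCat_exact_iff_function_exact _).1
    (h.homology_exact₁ (j + 1) j rfl)
  let δ' := (e j S.X₁).symm.toLinearMap ∘ₗ δ ∘ₗ (e (j + 1) S.X₃).toLinearMap
  have e_δ : δ ∘ₗ (e (j + 1) S.X₃).toLinearMap = (e j S.X₁).toLinearMap ∘ₗ δ' := by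
    ext; simp [δ']
  exact ⟨δ',
    (Function.Exact.iff_of_ladder_linearEquiv (e_naturality _ S.g) e_δ).1 h₃,
    (Function.Exact.iff_of_ladder_linearEquiv e_δ (e_naturality _ S.f)).1 h₁⟩

variable (L) in
lemma torFunctor_map_smul_id (j : ℕ) (N : ModuleCat.{u} R) (x : R) :
    (torFunctor L j).map (x • 𝟙 N) = x • 𝟙 _ := by
  rw [CategoryTheory.Functor.map_smul, CategoryTheory.Functor.map_id]

lemma subsingleton_torFunctor_congr {N N' : ModuleCat.{u} R} (e : N ≃ₗ[R] N') (j : ℕ) :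
    Subsingleton ((torFunctor L j).obj N) ↔ Subsingleton ((torFunctor L j).obj N') :=
  ((torFunctor L j).mapIso e.toModuleIso).toLinearEquiv.toEquiv.subsingleton_congr

lemma subsingleton_torFunctor_right (j : ℕ) {S : ShortComplex (ModuleCat.{u} R)}
    (hS : S.ShortExact) (h₂ : Subsingleton ((torFunctor L (j + 1)).obj S.X₂))
    (h₁ : Subsingleton ((torFunctor L j).obj S.X₁)) :
    Subsingleton ((torFunctor L (j + 1)).obj S.X₃) := by
  obtain ⟨δ, hδ, -⟩ := exists_torFunctor_connecting (L := L) j hS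
  exact subsingleton_of_exact (f := ((torFunctor L (j + 1)).map S.g).hom) hδ

lemma subsingleton_homology_succ_iff (K : ChainComplex (ModuleCat.{u} R) ℕ) (j : ℕ) :
    Subsingleton (K.homology (j + 1)) ↔
      Function.Exact (K.d (j + 2) (j + 1)) (K.d (j + 1) j) := by
  rw [← ModuleCat.isZero_iff_subsingleton, ← HomologicalComplex.exactAt_iff_isZero_homology,
    HomologicalComplex.exactAt_iff' K (j + 2) (j + 1) j (by simp) (by simp),
    ShortComplex.ShortExact.moduleCat_exact_iff_function_exact]
  rfl

lemma subsingleton_torFunctor_succ_iff (P : ProjectiveResolution L) (j : ℕ) (N : ModuleCat.{u} R) :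
    Subsingleton ((torFunctor L (j + 1)).obj N) ↔
      Function.Exact ((P.complex.d (j + 2) (j + 1)).hom.rTensor N)
        ((P.complex.d (j + 1) j).hom.rTensor N) :=
  ((torFunctorIso P (j + 1)).app N).toLinearEquiv.toEquiv.subsingleton_congr.trans
    (subsingleton_homology_succ_iff _ j)

lemma subsingleton_torFunctor_succ_of_flat (j : ℕ) (N : ModuleCat.{u} R) [Module.Flat R N] :
    Subsingleton ((torFunctor L (j + 1)).obj N) :=
  (subsingleton_torFunctor_succ_iff (projectiveResolution L) j N).2
    (Module.Flat.rTensor_exact N (function_exact_complex_d _ j))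

variable (L) in
lemma finite_torFunctor_obj [IsNoetherianRing R] [Module.Finite R L] (j : ℕ) (N : ModuleCat.{u} R)
    [Module.Finite R N] : Module.Finite R ((torFunctor L j).obj N) := by
  induction j generalizing N with
  | zero =>
    exact Module.Finite.equiv (M := TensorProduct R L N)
      ((torFunctorZeroIso L).app N).toLinearEquiv.symm
  | succ j ih =>
    obtain ⟨n, f, hf⟩ := Module.Finite.exists_fin' R N
    obtain ⟨δ, h, -⟩ := exists_torFunctor_connecting (L := L) j
      (LinearMap.shortExact_shortComplexKer hf)
    have : Subsingleton ((torFunctor L (j + 1)).obj (ModuleCat.of R (Fin n → R))) :=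
      subsingleton_torFunctor_succ_of_flat j _
    have : Module.Finite R ((torFunctor L j).obj (ModuleCat.of R (LinearMap.ker f))) := ih _
    exact Module.Finite.of_injective δ (injective_of_exact_of_subsingleton h)

lemma exists_complex_d_comp_eq (P : ProjectiveResolution L) {j : ℕ} {Y : ModuleCat.{u} R}
    (hY : Subsingleton (((_root_.Ext R (ModuleCat.{u} R) (j + 1)).obj (.op L)).obj Y))
    (f : P.complex.X (j + 1) ⟶ Y) (hf : P.complex.d (j + 2) (j + 1) ≫ f = 0) :
    ∃ g : P.complex.X j ⟶ Y, P.complex.d (j + 1) j ≫ g = f := by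
  have h := (ModuleCat.isZero_iff_subsingleton.2 hY).of_iso (P.isoExt (j + 1) Y).symm
  rw [← HomologicalComplex.exactAt_iff_isZero_homology,
    HomologicalComplex.exactAt_iff' _ j (j + 1) (j + 2) (by simp) (by simp),
    ShortComplex.ShortExact.moduleCat_exact_iff_function_exact] at h
  exact (h f).1 hf

lemma subsingleton_torFunctor_succ_of_ext {j : ℕ}
    (h : ∀ Y, Subsingleton (((_root_.Ext R (ModuleCat.{u} R) (j + 1)).obj (.op L)).obj Y))
    (N : ModuleCat.{u} R) : Subsingleton ((torFunctor L (j + 1)).obj N) := by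
  let P := projectiveResolution L
  let d := (P.complex.d (j + 2) (j + 1)).hom
  obtain ⟨s, hs⟩ := exists_complex_d_comp_eq P (h (ModuleCat.of R (_ ⧸ LinearMap.range d)))
    (ModuleCat.ofHom (LinearMap.range d).mkQ) (ModuleCat.hom_ext (LinearMap.range_mkQ_comp d))
  exact (subsingleton_torFunctor_succ_iff P j N).2 (rTensor_exact_of_comp_eq_mkQ
    (congrArg ModuleCat.Hom.hom (P.complex.d_comp_d (j + 2) (j + 1) j))
    (congrArg ModuleCat.Hom.hom hs) N)

/-! ### Balancing -/

lemma shortExact_subtype_mkQ {A : Type u} [AddCommGroup A] [Module R A] (B : Submodule R A) :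
    (ModuleCat.shortComplexOfCompEqZero B.subtype B.mkQ
      (LinearMap.exact_subtype_mkQ B).linearMap_comp_eq_zero).ShortExact :=
  ModuleCat.shortComplex_shortExact _ (LinearMap.exact_subtype_mkQ B) B.injective_subtype
    B.mkQ_surjective

lemma lTensor_injective_of_subsingleton_torFunctor_one {S : ShortComplex (ModuleCat.{u} R)}
    (hS : S.ShortExact) (h : Subsingleton ((torFunctor L 1).obj S.X₃)) :
    Function.Injective (S.f.hom.lTensor L) := by
  obtain ⟨δ, -, hδ⟩ := exists_torFunctor_connecting (L := L) 0 hS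
  have : Mono ((torFunctor L 0).map S.f) :=
    (ModuleCat.mono_iff_injective _).2 (injective_of_exact_of_subsingleton hδ)
  have : Mono ((tensorLeft L).map S.f) :=
    ((MorphismProperty.monomorphisms _).arrow_mk_iso_iff (Arrow.isoMk
      ((torFunctorZeroIso L).app _) ((torFunctorZeroIso L).app _)
      ((torFunctorZeroIso L).hom.naturality S.f).symm)).1 ‹_›
  exact (ModuleCat.mono_iff_injective ((tensorLeft L).map S.f)).1 this

lemma lTensor_subtype_injective_of_subsingleton_torFunctor_one {A : Type u} [AddCommGroup A]
    [Module R A] (B : Submodule R A)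
    (h : Subsingleton ((torFunctor L 1).obj (.of R (A ⧸ B)))) :
    Function.Injective (B.subtype.lTensor L) :=
  (lTensor_injective_of_subsingleton_torFunctor_one (shortExact_subtype_mkQ B) h :)

/-- The `i`-th syzygy of `M` in the resolution `Q`, encoded as the cokernel of `Q_{i+1} → Q_i`. -/
abbrev syzygy (Q : ProjectiveResolution M) (i : ℕ) : ModuleCat.{u} R :=
  .of R (Q.complex.X i ⧸ LinearMap.range (Q.complex.d (i + 1) i).hom)

/-- The zeroth syzygy of `M` is `M`. -/
noncomputable def syzygyZeroEquiv (Q : ProjectiveResolution M) : syzygy Q 0 ≃ₗ[R] M :=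
  ((ShortComplex.ShortExact.moduleCat_exact_iff_function_exact _).1
    Q.exact₀).linearEquivOfSurjective ((ModuleCat.epi_iff_surjective _).1 inferInstance)

/-- The syzygy `i + 1` of `M` is the image of `Q_{i+1} → Q_i`. -/
noncomputable def syzygySuccEquiv (Q : ProjectiveResolution M) (i : ℕ) :
    syzygy Q (i + 1) ≃ₗ[R] LinearMap.range (Q.complex.d (i + 1) i).hom :=
  have h : Function.Exact (Q.complex.d (i + 2) (i + 1)).hom
      (Q.complex.d (i + 1) i).hom.rangeRestrict :=
    fun x ↦ Subtype.ext_iff.trans (function_exact_complex_d Q i x)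
  h.linearEquivOfSurjective (LinearMap.surjective_rangeRestrict _)

lemma subsingleton_torFunctor_syzygy (Q : ProjectiveResolution M)
    (hM : ∀ j, Subsingleton ((torFunctor L (j + 1)).obj M)) (i j : ℕ) :
    Subsingleton ((torFunctor L (j + 1)).obj (syzygy Q i)) := by
  induction i generalizing j with
  | zero => exact (subsingleton_torFunctor_congr (syzygyZeroEquiv Q) _).2 (hM j)
  | succ i ih =>
    rw [subsingleton_torFunctor_congr (N' := .of R _) (syzygySuccEquiv Q i)]
    obtain ⟨δ, -, hδ⟩ := exists_torFunctor_connecting (L := L) (j + 1)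
      (shortExact_subtype_mkQ (LinearMap.range (Q.complex.d (i + 1) i).hom))
    have := ih (j + 1)
    have := flat_complex_X Q i
    have := subsingleton_torFunctor_succ_of_flat (L := L) j (Q.complex.X i)
    exact subsingleton_of_exact hδ

lemma lTensor_exact_complex_d (Q : ProjectiveResolution M)
    (hM : ∀ j, Subsingleton ((torFunctor L (j + 1)).obj M)) (i : ℕ) :
    Function.Exact ((Q.complex.d (i + 2) (i + 1)).hom.lTensor L)
      ((Q.complex.d (i + 1) i).hom.lTensor L) :=
  lTensor_exact_of_lTensor_range_subtype_injective (function_exact_complex_d Q i)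
    (lTensor_subtype_injective_of_subsingleton_torFunctor_one _
      (subsingleton_torFunctor_syzygy Q hM i 0))

lemma subsingleton_tor_succ_of_subsingleton_torFunctor_succ
    (hM : ∀ j, Subsingleton ((torFunctor L (j + 1)).obj M)) (i : ℕ) :
    Subsingleton (((Tor (ModuleCat.{u} R) (i + 1)).obj L).obj M) :=
  let Q := projectiveResolution M
  (Q.isoLeftDerivedObj ((tensoringLeft _).obj L)
    (i + 1)).toLinearEquiv.toEquiv.subsingleton_congr.2
      ((subsingleton_homology_succ_iff _ i).2 (lTensor_exact_complex_d Q hM i))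

/-! ### Supports of `Tor_j(L, A)` -/

section Support

variable {p : PrimeSpectrum R}

variable (L) in
lemma annihilator_le_annihilator_torFunctor (j : ℕ) (N : ModuleCat.{u} R) :
    Module.annihilator R N ≤ Module.annihilator R ((torFunctor L j).obj N) := by
  intro x hx
  have h_zero : x • 𝟙 N = 0 := by ext a; exact Module.mem_annihilator.1 hx a
  refine Module.mem_annihilator.2 fun t ↦ ?_
  have h_smul := torFunctor_map_smul_id L j N x
  rw [h_zero, CategoryTheory.Functor.map_zero] at h_smul
  exact (ConcreteCategory.congr_hom h_smul t).symm

lemma torFunctor_smul_exact (j : ℕ) {N : ModuleCat.{u} R} {x : R} (hx : IsSMulRegular N x) :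
    Function.Exact (LinearMap.lsmul R ((torFunctor L j).obj N) x)
      ((torFunctor L j).map (N.smulShortComplex x).g).hom := by
  have h := torFunctor_map_exact (L := L) j hx.smulShortComplex_shortExact
  have h_smul : (torFunctor L j).map (N.smulShortComplex x).f = x • 𝟙 _ :=
    torFunctor_map_smul_id L j N x
  rwa [h_smul] at h

lemma notMem_support_torFunctor_of_notMem_support (j : ℕ) {N : ModuleCat.{u} R} [Module.Finite R N]
    (hp : p ∉ Module.support R N) : p ∉ Module.support R ((torFunctor L j).obj N) := by
  rw [Module.mem_support_iff_of_finite] at hp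
  exact fun h ↦ hp ((annihilator_le_annihilator_torFunctor L j N).trans
    (Module.annihilator_le_of_mem_support h))

lemma notMem_support_torFunctor_left (j : ℕ) {S : ShortComplex (ModuleCat.{u} R)}
    (hS : S.ShortExact) (h₃ : p ∉ Module.support R ((torFunctor L (j + 1)).obj S.X₃))
    (h₂ : p ∉ Module.support R ((torFunctor L j).obj S.X₂)) :
    p ∉ Module.support R ((torFunctor L j).obj S.X₁) := by
  obtain ⟨δ, -, hδ⟩ := exists_torFunctor_connecting (L := L) j hS
  exact fun h ↦ (support_subset_union_of_exact (g := ((torFunctor L j).map S.f).hom) hδ h).elim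
    h₃ h₂

lemma notMem_support_torFunctor_middle (j : ℕ) {S : ShortComplex (ModuleCat.{u} R)}
    (hS : S.ShortExact)
    (h₁ : p ∉ Module.support R ((torFunctor L j).obj S.X₁))
    (h₃ : p ∉ Module.support R ((torFunctor L j).obj S.X₃)) :
    p ∉ Module.support R ((torFunctor L j).obj S.X₂) :=
  fun h ↦ (support_subset_union_of_exact (f := ((torFunctor L j).map S.f).hom)
    (torFunctor_map_exact j hS) h).elim h₁ h₃

lemma notMem_support_torFunctor_right (j : ℕ) {S : ShortComplex (ModuleCat.{u} R)}
    (hS : S.ShortExact) (h₂ : p ∉ Module.support R ((torFunctor L (j + 1)).obj S.X₂))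
    (h₁ : p ∉ Module.support R ((torFunctor L j).obj S.X₁)) :
    p ∉ Module.support R ((torFunctor L (j + 1)).obj S.X₃) := by
  obtain ⟨δ, hδ, -⟩ := exists_torFunctor_connecting (L := L) j hS
  exact fun h ↦ (support_subset_union_of_exact (f := ((torFunctor L (j + 1)).map S.g).hom)
    hδ h).elim h₂ h₁

lemma notMem_support_torFunctor_of_exact (j : ℕ) {A B C : Type u} [AddCommGroup A] [Module R A]
    [AddCommGroup B] [Module R B] [AddCommGroup C] [Module R C] {f : A →ₗ[R] B} {g : B →ₗ[R] C}
    (hfg : Function.Exact f g) (hg : Function.Surjective g)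
    (h_ker : p ∉ Module.support R ((torFunctor L j).obj (.of R (LinearMap.ker f))))
    (hA : p ∉ Module.support R ((torFunctor L (j + 1)).obj (.of R A)))
    (hB : p ∉ Module.support R ((torFunctor L (j + 2)).obj (.of R B))) :
    p ∉ Module.support R ((torFunctor L (j + 2)).obj (.of R C)) := by
  have h_exact : Function.Exact (LinearMap.range f).subtype g :=
    LinearMap.exact_iff.2 (by rw [Submodule.range_subtype, hfg.linearMap_ker_eq])
  rw [← f.ker_rangeRestrict] at h_ker
  have h_range := notMem_support_torFunctor_right j
    (LinearMap.shortExact_shortComplexKer f.surjective_rangeRestrict) hA h_ker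
  have hS := ModuleCat.shortComplex_shortExact
    (ModuleCat.shortComplexOfCompEqZero _ g h_exact.linearMap_comp_eq_zero) h_exact
    (Submodule.injective_subtype _) hg
  exact (notMem_support_torFunctor_right (j + 1) hS hB h_range :)

variable [IsNoetherianRing R]

lemma notMem_support_torFunctor_of_prime_quotients (j : ℕ)
    (N : Type u) [AddCommGroup N] [Module R N] [Module.Finite R N]
    (h : ∀ q ∈ Module.support R N,
      p ∉ Module.support R ((torFunctor L j).obj (.of R (R ⧸ q.asIdeal)))) :
    p ∉ Module.support R ((torFunctor L j).obj (.of R N)) :=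
  prime_quotient_induction (P := fun N ↦ p ∉ Module.support R ((torFunctor L j).obj N))
    (fun _ _ ↦ notMem_support_torFunctor_of_notMem_support j (notMem_support_of_subsingleton p))
    (fun _ hS ↦ notMem_support_torFunctor_middle j hS) N h

variable [Module.Finite R L]

lemma notMem_support_torFunctor_quotient_of_lt (j : ℕ) {q : PrimeSpectrum R} (hqp : q < p)
    (ih : ∀ q', q < q' → p ∉ Module.support R ((torFunctor L j).obj (.of R (R ⧸ q'.asIdeal)))) :
    p ∉ Module.support R ((torFunctor L j).obj (.of R (R ⧸ q.asIdeal))) := by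
  obtain ⟨x, hxp, hxq⟩ := SetLike.exists_of_lt (show q.asIdeal < p.asIdeal from hqp)
  have h_quot := notMem_support_torFunctor_of_prime_quotients (L := L) j
    (QuotSMulTop x (R ⧸ q.asIdeal)) fun q' hq' ↦
      ih q' (lt_of_mem_support_quotSMulTop_quotient hxq hq')
  have := finite_torFunctor_obj L j (.of R (R ⧸ q.asIdeal))
  exact notMem_support_of_exact_smul (torFunctor_smul_exact (L := L) j
    (N := .of R (R ⧸ q.asIdeal)) (isSMulRegular_quotient_of_notMem q hxq)) hxp h_quot

/-- Along the primes below `p`, vanishing at `p` propagates downwards by Nakayama's lemma. -/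
lemma notMem_support_torFunctor_of_notMem_support_quotient (j : ℕ)
    (hp : p ∉ Module.support R ((torFunctor L j).obj (.of R (R ⧸ p.asIdeal))))
    (N : Type u) [AddCommGroup N] [Module R N] [Module.Finite R N] :
    p ∉ Module.support R ((torFunctor L j).obj (.of R N)) := by
  have := wellFoundedGT_primeSpectrum R
  suffices h : ∀ q : PrimeSpectrum R,
      p ∉ Module.support R ((torFunctor L j).obj (.of R (R ⧸ q.asIdeal))) by
    exact notMem_support_torFunctor_of_prime_quotients j N fun q _ ↦ h q
  intro q
  induction q using WellFoundedGT.induction with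
  | ind q ih =>
    by_cases hqp : q ≤ p
    · rcases hqp.eq_or_lt with rfl | hlt
      · exact hp
      · exact notMem_support_torFunctor_quotient_of_lt j hlt ih
    · refine notMem_support_torFunctor_of_notMem_support j ?_
      rwa [Module.mem_support_iff_of_finite, Ideal.annihilator_quotient]

lemma notMem_support_torFunctor_of_mem_associatedPrimes {A : Type u} [AddCommGroup A] [Module R A]
    [Module.Finite R A] {n : ℕ}
    (hn : ∀ j, n < j → ∀ N, Subsingleton ((torFunctor L j).obj N)) {k : ℕ}
    (hp : p.asIdeal ∈ associatedPrimes R A)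
    (hA : ∀ j, k < j → p ∉ Module.support R ((torFunctor L j).obj (.of R A))) {j : ℕ}
    (hj : k < j) : p ∉ Module.support R ((torFunctor L j).obj (.of R (R ⧸ p.asIdeal))) := by
  obtain ⟨-, f, hf⟩ := (isAssociatedPrime_iff_exists_injective_linearMap _ _).1 hp
  by_cases hnj : n < j
  · have := hn j hnj (.of R (R ⧸ p.asIdeal))
    exact notMem_support_of_subsingleton p
  have ih := notMem_support_torFunctor_of_mem_associatedPrimes hn hp hA (j := j + 1) (by omega)
  have hS := ModuleCat.shortComplex_shortExact
    (ModuleCat.shortComplexOfCompEqZero f _ f.exact_map_mkQ_range.linearMap_comp_eq_zero)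
    f.exact_map_mkQ_range hf (Submodule.mkQ_surjective _)
  exact (notMem_support_torFunctor_left j hS
    (notMem_support_torFunctor_of_notMem_support_quotient (j + 1) ih _) (hA j hj) :)
termination_by n + 1 - j

/-- While `p` is not associated to `A`, prime avoidance replaces `A` by `A ⧸ y A` and `k` by
`k + 1`, and the heights of the primes below `p` in the support bound the number of such steps. -/
lemma notMem_support_torFunctor_quotient_of_height_lt {A : Type u} [AddCommGroup A] [Module R A]
    [Module.Finite R A] {n : ℕ}
    (hn : ∀ j, n < j → ∀ N, Subsingleton ((torFunctor L j).obj N)) {c : ℕ}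
    (hc : Order.height p = c) {k : ℕ} (hpA : p ∈ Module.support R A)
    (hk : ∀ q ∈ Module.support R A, q ≤ p → (k : ℕ∞) ≤ Order.height q)
    (hA : ∀ j, k < j → p ∉ Module.support R ((torFunctor L j).obj (.of R A))) {j : ℕ}
    (hj : c < j) : p ∉ Module.support R ((torFunctor L j).obj (.of R (R ⧸ p.asIdeal))) := by
  have hkc : k ≤ c := by exact_mod_cast (hk p hpA le_rfl).trans hc.le
  by_cases hp : p.asIdeal ∈ associatedPrimes R A
  · exact notMem_support_torFunctor_of_mem_associatedPrimes hn hp hA (hkc.trans_lt hj)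
  obtain ⟨y, hyp, hy⟩ := exists_mem_forall_notMem_associatedPrimes_le hp
  have hpA' : p ∈ Module.support R (QuotSMulTop y A) := by
    rw [Module.support_quotSMulTop]
    exact ⟨hpA, Set.singleton_subset_iff.2 hyp⟩
  have hk' : ∀ q ∈ Module.support R (QuotSMulTop y A), q ≤ p →
      ((k + 1 : ℕ) : ℕ∞) ≤ Order.height q :=
    fun q hq hqp ↦ height_add_one_le_of_mem_support_quotSMulTop hy hk hq hqp
  have : k + 1 ≤ c := by exact_mod_cast (hk' p hpA' le_rfl).trans hc.le
  refine notMem_support_torFunctor_quotient_of_height_lt hn hc hpA' hk' (fun j hj ↦ ?_) hj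
  obtain ⟨j, rfl⟩ := Nat.exists_eq_add_of_le' (show 2 ≤ j by omega)
  exact notMem_support_torFunctor_of_exact j (LinearMap.exact_lsmul_mkQ_smul_top A y)
    (Submodule.mkQ_surjective _)
    (notMem_support_torFunctor_of_notMem_support j (notMem_support_ker_lsmul hy))
    (hA _ (by omega)) (hA _ (by omega))
termination_by c - k
decreasing_by omega

lemma le_height_of_mem_support_torFunctor {A : Type u} [AddCommGroup A] [Module R A]
    [Module.Finite R A] {n : ℕ}
    (hn : ∀ j, n < j → ∀ N, Subsingleton ((torFunctor L j).obj N)) {j : ℕ}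
    (hp : p ∈ Module.support R ((torFunctor L j).obj (.of R A))) : j ≤ Order.height p := by
  by_contra! hj
  obtain ⟨c, hc⟩ := ENat.ne_top_iff_exists.1 hj.ne_top
  rw [← hc] at hj
  have hpR : p ∈ Module.support R R := by
    rw [Module.mem_support_iff_of_finite, Module.annihilator_eq_bot.2 inferInstance]
    exact bot_le
  have hR (i : ℕ) (hi : 0 < i) : p ∉ Module.support R ((torFunctor L i).obj (.of R R)) := by
    obtain ⟨i, rfl⟩ := Nat.exists_eq_add_of_le' hi
    have := subsingleton_torFunctor_succ_of_flat (L := L) i (.of R R)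
    exact notMem_support_of_subsingleton p
  exact notMem_support_torFunctor_of_notMem_support_quotient j
    (notMem_support_torFunctor_quotient_of_height_lt hn hc.symm hpR (by simp) hR
      (by exact_mod_cast hj)) A hp

end Support

/-! ### Regular sequences in a prime -/

section Ischebeck

open Abelian

lemma subsingleton_ext_middle {S : ShortComplex (ModuleCat.{u} R)} (hS : S.ShortExact) (i : ℕ)
    (M : ModuleCat.{u} R) (h₁ : Subsingleton (Ext S.X₁ M i)) (h₃ : Subsingleton (Ext S.X₃ M i)) :
    Subsingleton (Ext S.X₂ M i) := by
  refine subsingleton_of_forall_eq 0 fun e ↦ ?_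
  obtain ⟨e', rfl⟩ := Ext.contravariant_sequence_exact₂ hS M e (Subsingleton.elim _ _)
  rw [Subsingleton.elim e' 0, Ext.comp_zero]

variable [IsNoetherianRing R]

lemma subsingleton_ext_of_prime_quotients (N : Type u) [AddCommGroup N] [Module R N]
    [Module.Finite R N] {i : ℕ}
    (h : ∀ q ∈ Module.support R N, Subsingleton (Ext (.of R (R ⧸ q.asIdeal)) M i)) :
    Subsingleton (Ext (.of R N) M i) :=
  prime_quotient_induction (P := fun N ↦ Subsingleton (Ext N M i))
    (fun N _ ↦ subsingleton_of_forall_eq 0 fun e ↦ by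
      rw [← Ext.mk₀_id_comp e, (ModuleCat.isZero_of_subsingleton N).eq_of_src (𝟙 N) 0, Ext.mk₀_zero,
        Ext.zero_comp])
    (fun _ hS h₁ h₃ ↦ subsingleton_ext_middle hS i M h₁ h₃) N h

variable [IsLocalRing R] [Module.Finite R M]

lemma subsingleton_ext_of_quotSMulTop {N : Type u} [AddCommGroup N] [Module R N]
    [Module.Finite R N] {x : R} (hx : x ∈ maximalIdeal R) (hx' : IsSMulRegular N x)
    {i : ℕ} (h : Subsingleton (Ext (.of R (QuotSMulTop x N)) M (i + 1))) :
    Subsingleton (Ext (.of R N) M i) := by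
  have hS := IsSMulRegular.smulShortComplex_shortExact (M := .of R N) hx'
  have h_smul (e : Ext (.of R N) M i) :
      (Ext.mk₀ (x • 𝟙 (ModuleCat.of R N))).comp e (zero_add i) = x • e := by
    rw [Ext.mk₀_smul, Ext.smul_comp, Ext.mk₀_id_comp]
  have h_le : (⊤ : Submodule R (Ext (.of R N) M i)) ≤ maximalIdeal R • ⊤ := fun e _ ↦ by
    obtain ⟨e', rfl⟩ := Ext.contravariant_sequence_exact₁ hS M e (add_comm 1 i) (h.elim _ _)
    exact (h_smul e').symm ▸ Submodule.smul_mem_smul hx trivial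
  by_contra! h_nontrivial
  exact Submodule.top_ne_ideal_smul_of_le_jacobson_annihilator (maximalIdeal_le_jacobson _)
    (top_le_iff.1 h_le).symm

/-- Ischebeck's theorem, with the depth of `M` expressed by the vanishing of `Ext`. -/
lemma subsingleton_ext_prime_quotient {d : ℕ}
    (hM : ∀ i < d, Subsingleton (Ext (.of R (R ⧸ maximalIdeal R)) M i))
    (p : PrimeSpectrum R) {i : ℕ} (hi : ((i + 1 : ℕ) : ℕ∞) + Order.coheight p ≤ d) :
    Subsingleton (Ext (.of R (R ⧸ p.asIdeal)) M i) := by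
  have := wellFoundedGT_primeSpectrum R
  induction p using WellFoundedGT.induction generalizing i with | ind p ih
  by_cases h_max : maximalIdeal R ≤ p.asIdeal
  · rw [(le_maximalIdeal p.2.ne_top).antisymm h_max]
    exact hM i (by exact_mod_cast le_self_add.trans hi)
  obtain ⟨x, hx, hxp⟩ := SetLike.not_le_iff_exists.1 h_max
  refine subsingleton_ext_of_quotSMulTop hx (isSMulRegular_quotient_of_notMem p hxp)
    (subsingleton_ext_of_prime_quotients _ fun q hq ↦ ?_)
  have hpq := lt_of_mem_support_quotSMulTop_quotient hxp hq
  refine ih q hpq (le_trans ?_ hi)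
  calc ((i + 1 + 1 : ℕ) : ℕ∞) + Order.coheight q = (i + 1 : ℕ) + (Order.coheight q + 1) := by
        push_cast; ring
    _ ≤ (i + 1 : ℕ) + Order.coheight p := by gcongr; exact Order.coheight_add_one_le hpq

lemma exists_isRegular_mem_of_isRegular {rs : List R} (h_mem : ∀ x ∈ rs, x ∈ maximalIdeal R)
    (hrs : RingTheory.Sequence.IsRegular M rs) (p : PrimeSpectrum R) {e : ℕ}
    (he : e + Order.coheight p ≤ rs.length) :
    ∃ xs : List R, xs.length = e ∧ (∀ x ∈ xs, x ∈ p.asIdeal) ∧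
      RingTheory.Sequence.IsRegular M xs := by
  have : Nontrivial M := hrs.nontrivial
  have h_lt {I : Ideal R} (hI : I ≤ maximalIdeal R) : I • (⊤ : Submodule R M) < ⊤ :=
    (Submodule.top_ne_ideal_smul_of_le_jacobson_annihilator
      (hI.trans (maximalIdeal_le_jacobson _))).symm.lt_top
  have h_ext : ∀ i < rs.length, Subsingleton (Ext (.of R (R ⧸ maximalIdeal R)) M i) :=
    ModuleCat.subsingleton_ext_of_exists_isRegular (maximalIdeal R) (.of R (R ⧸ maximalIdeal R))
      (by rw [Module.support_eq_zeroLocus, Ideal.annihilator_quotient]) M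
      (h_lt le_rfl) rs h_mem hrs
  refine ModuleCat.exists_isRegular_of_exists_subsingleton_ext p.asIdeal e M
    (h_lt (le_maximalIdeal p.2.ne_top)) (.of R (R ⧸ p.asIdeal))
    (by rw [Module.support_eq_zeroLocus, Ideal.annihilator_quotient])
    fun i hi ↦ subsingleton_ext_prime_quotient h_ext p (le_trans ?_ he)
  gcongr
  exact hi

end Ischebeck

/-! ### Vanishing of `Tor_j(L, M)` -/

section Vanishing

variable {N : ModuleCat.{u} R} {x : R} [IsNoetherianRing R]

lemma mem_associatedPrimes_torFunctor_quotSMulTop (hx : IsSMulRegular N x) {i : ℕ}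
    (hN : Subsingleton ((torFunctor L (i + 1)).obj N)) {p : Ideal R} (hxp : x ∈ p)
    (hp : p ∈ associatedPrimes R ((torFunctor L i).obj N)) :
    p ∈ associatedPrimes R ((torFunctor L (i + 1)).obj (.of R (QuotSMulTop x N))) := by
  obtain ⟨δ, h_exact, h_exact'⟩ := exists_torFunctor_connecting (L := L) i
    hx.smulShortComplex_shortExact
  have : Subsingleton ((torFunctor L (i + 1)).obj (N.smulShortComplex x).X₂) := hN
  have hδ : Function.Injective δ := injective_of_exact_of_subsingleton
    (f := ((torFunctor L (i + 1)).map (N.smulShortComplex x).g).hom) h_exact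
  have h_smul : (torFunctor L i).map (N.smulShortComplex x).f = x • 𝟙 _ :=
    torFunctor_map_smul_id L i N x
  rw [h_smul] at h_exact'
  exact mem_associatedPrimes_of_exact_smul hδ h_exact' hxp hp

variable [Module.Finite R L]

lemma add_length_le_height {n : ℕ} (hn : ∀ j, n < j → ∀ N, Subsingleton ((torFunctor L j).obj N))
    {p : PrimeSpectrum R} {xs : List R} (h_mem : ∀ x ∈ xs, x ∈ p.asIdeal)
    {M : Type u} [AddCommGroup M] [Module R M] [Module.Finite R M]
    (hxs : RingTheory.Sequence.IsWeaklyRegular M xs) {i : ℕ}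
    (hp : p.asIdeal ∈ associatedPrimes R ((torFunctor L i).obj (.of R M)))
    (h_top : ∀ j, i < j → Subsingleton ((torFunctor L j).obj (.of R M))) :
    ((i + xs.length : ℕ) : ℕ∞) ≤ Order.height p := by
  induction xs generalizing M i with
  | nil =>
    have := finite_torFunctor_obj L i (.of R M)
    exact le_height_of_mem_support_torFunctor hn (mem_support_of_mem_associatedPrimes hp)
  | cons x xs ih =>
    obtain ⟨hx, hxs⟩ := (RingTheory.Sequence.isWeaklyRegular_cons_iff M x xs).1 hxs
    have hx' : IsSMulRegular (ModuleCat.of R M) x := hx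
    rw [List.length_cons, add_comm xs.length, ← add_assoc]
    refine ih (fun y hy ↦ h_mem y (.tail x hy)) hxs
      (mem_associatedPrimes_torFunctor_quotSMulTop hx' (h_top _ i.lt_succ_self)
        (h_mem x (.head xs)) hp) fun j hj ↦ ?_
    obtain ⟨j, rfl⟩ := Nat.exists_eq_add_of_lt hj
    exact (subsingleton_torFunctor_right (i + 1 + j) hx'.smulShortComplex_shortExact
      (h_top _ (by omega)) (h_top _ (by omega)) :)

variable [IsLocalRing R]

lemma subsingleton_torFunctor_succ_of_isRegular {n : ℕ}
    (hn : ∀ j, n < j → ∀ N, Subsingleton ((torFunctor L j).obj N))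
    {M : Type u} [AddCommGroup M] [Module R M] [Module.Finite R M] {rs : List R}
    (h_mem : ∀ x ∈ rs, x ∈ maximalIdeal R) (hrs : RingTheory.Sequence.IsRegular M rs)
    (h_dim : ringKrullDim R ≤ rs.length) (j : ℕ) :
    Subsingleton ((torFunctor L (j + 1)).obj (.of R M)) := by
  by_cases hnj : n < j + 1
  · exact hn _ hnj _
  by_contra! h_nontrivial
  have h_top (i : ℕ) (hi : j + 1 < i) : Subsingleton ((torFunctor L i).obj (.of R M)) := by
    obtain ⟨k, rfl⟩ := Nat.exists_eq_add_of_lt hi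
    exact subsingleton_torFunctor_succ_of_isRegular hn h_mem hrs h_dim (j + 1 + k)
  obtain ⟨q, hq⟩ := associatedPrimes.nonempty R ((torFunctor L (j + 1)).obj (.of R M))
  let p : PrimeSpectrum R := ⟨q, hq.isPrime⟩
  have h_sum : Order.height p + Order.coheight p ≤ rs.length := by
    have h := Order.krullDim_eq_iSup_height_add_coheight_of_nonempty.symm.trans_le h_dim
    exact (le_iSup (fun a : PrimeSpectrum R ↦ Order.height a + Order.coheight a) p).trans
      (by exact_mod_cast h)
  obtain ⟨r, hr⟩ := ENat.ne_top_iff_exists.1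
    (ne_top_of_le_ne_top (ENat.natCast_ne_top _) (le_add_self.trans h_sum))
  rw [← hr] at h_sum
  have hr_le : r ≤ rs.length := by exact_mod_cast le_add_self.trans h_sum
  obtain ⟨xs, h_length, hxs_mem, hxs⟩ := exists_isRegular_mem_of_isRegular (M := .of R M) h_mem hrs
    p (e := rs.length - r) (by rw [← hr]; exact_mod_cast (Nat.sub_add_cancel hr_le).le)
  have h_height := add_length_le_height hn hxs_mem hxs.toIsWeaklyRegular (p := p) hq h_top
  have h_le : j + 1 + xs.length + r ≤ rs.length := by
    exact_mod_cast (add_le_add_left h_height (r : ℕ∞)).trans h_sum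
  omega
termination_by n - j

end Vanishing

lemma exists_isRegular_of_moduleDepth_eq {R M : Type} [CommRing R] [IsLocalRing R]
    [AddCommGroup M] [Module R M] {d : ℕ} (h : moduleDepth R M = d) :
    ∃ rs : List R, (∀ x ∈ rs, x ∈ maximalIdeal R) ∧ RingTheory.Sequence.IsRegular M rs ∧
      d ≤ rs.length := by
  obtain ⟨a, ha, had⟩ : ∃ a : WithBot (WithTop ℕ), a < d ∧ ∀ n : ℕ, a < n → d ≤ n := by
    cases d with
    | zero => exact ⟨⊥, WithBot.bot_lt_coe _, fun n _ ↦ n.zero_le⟩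
    | succ d => exact ⟨d, by exact_mod_cast d.lt_succ_self, fun n hn ↦ by exact_mod_cast hn⟩
  obtain ⟨_, ⟨rs, h_mem, hrs, rfl⟩, h_lt⟩ := lt_sSup_iff.1 (ha.trans_eq h.symm)
  exact ⟨rs, h_mem, hrs, had _ h_lt⟩

end

/-- over a commutative Noetherian local ring `R` (of finite Krull
dimension), if `M` is maximal Cohen-Macaulay (`depth M = dim R`) and `L` has finite
projective dimension, then `Tor_i(L, M) = 0` for all `i ≥ 1`. -/
theorem stmt_2 (R : Type) [CommRing R] [IsNoetherianRing R] [IsLocalRing R]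
    (hdim : ringKrullDim R < ⊤)
    (L M : Type) [AddCommGroup L] [Module R L] [Module.Finite R L]
    [AddCommGroup M] [Module R M] [Module.Finite R M]
    (hMCM : moduleDepth R M = ringKrullDim R)
    (hL : HasFinitePD R L) :
    ∀ i : ℕ, 1 ≤ i →
      Subsingleton (((Tor (ModuleCat.{0} R) i).obj (ModuleCat.of R L)).obj
        (ModuleCat.of R M)) := by
  obtain ⟨n, hn⟩ := hL
  have h_vanish (j : ℕ) (hj : n < j) (N : ModuleCat R) :
      Subsingleton ((torFunctor (.of R L) j).obj N) := by
    obtain ⟨j, rfl⟩ := Nat.exists_eq_add_of_lt hj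
    exact subsingleton_torFunctor_succ_of_ext (fun Y ↦ hn Y _ hj) N
  obtain ⟨d, hd⟩ : ∃ d : ℕ, ringKrullDim R = d := by
    lift ringKrullDim R to ℕ∞ using ringKrullDim_ne_bot with e
    lift e to ℕ using (WithBot.coe_lt_coe.1 hdim).ne
    exact ⟨e, rfl⟩
  obtain ⟨rs, h_mem, hrs, h_length⟩ := exists_isRegular_of_moduleDepth_eq (hMCM.trans hd)
  intro i hi
  obtain ⟨i, rfl⟩ := Nat.exists_eq_add_of_le' hi
  exact subsingleton_tor_succ_of_subsingleton_torFunctor_succ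
    (subsingleton_torFunctor_succ_of_isRegular h_vanish h_mem hrs
      (hd.trans_le (by exact_mod_cast h_length))) i
end

section
/- Let S be a commutative Noetherian local ring, f \in S a non zero-divisor, R = S/(f), and M, N finitely generated R-modules. Then there is an exact sequence Tor_2^S(M,N) \to Tor_2^R(M,N) \to M \otimes_R N \to Tor_1^S(M,N) \to Tor_1^R(M,N) \to 0. -/
open CategoryTheory

open scoped TensorProduct

/-!
Resolve `N` over `S` by `0 → K → F → N → 0` with `F` free. Since `f` kills `N` and is regular on
`F`, the snake lemma for multiplication by `f` gives an exact sequence of `R`-modules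
`0 → N → R ⊗ K → R ⊗ F → N → 0`. Let `N'` be the image of `R ⊗ K → R ⊗ F`. As `f` is regular on `K`,
`Tor₁^R(M, R ⊗ K) ≅ Tor₁^S(M, K) ≅ Tor₂^S(M, N)`, and `Tor₁^R(M, N') ≅ Tor₂^R(M, N)`; so the
low-degree Tor sequence of `0 → N → R ⊗ K → N' → 0` reads
`Tor₂^S(M, N) → Tor₂^R(M, N) → M ⊗_R N → M ⊗_R (R ⊗ K) → M ⊗_R N' → 0`. The last map restricts to a
surjection from the kernel of `M ⊗_R (R ⊗ K) → M ⊗_R (R ⊗ F)`, which is `Tor₁^S(M, N)`, onto the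
kernel of `M ⊗_R N' → M ⊗_R (R ⊗ F)`, which is `Tor₁^R(M, N)`.
-/

universe u v u' v'

section DimensionShift

open Limits

variable {C : Type u} [Category.{v} C] [Abelian C]

lemma exact_comp_f_of_epi {S : ShortComplex C} (hS : S.Exact) {X : C} (g : X ⟶ S.X₁) [Epi g] :
    (ShortComplex.mk (g ≫ S.f) S.g (by simp)).Exact :=
  (ShortComplex.exact_iff_of_epi_of_isIso_of_mono
    (S₁ := .mk (g ≫ S.f) S.g (by simp)) (S₂ := S) ⟨g, 𝟙 _, 𝟙 _, by simp, by simp⟩).2 hS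

lemma exact_comp_g_of_mono {S : ShortComplex C} (hS : S.Exact) {X : C} (g : S.X₃ ⟶ X) [Mono g] :
    (ShortComplex.mk S.f (S.g ≫ g) (by simp)).Exact :=
  (ShortComplex.exact_iff_of_epi_of_isIso_of_mono
    (S₁ := S) (S₂ := .mk S.f (S.g ≫ g) (by simp)) ⟨𝟙 _, 𝟙 _, g, by simp, by simp⟩).1 hS

/-- The augmentation `P₀ ⟶ X` of a projective resolution `P` of `X`, with codomain `X` itself
rather than the degree-zero term of the complex `X` concentrated in degree zero. -/
noncomputable def resolutionAugmentation {X : C} (P : ProjectiveResolution X) :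
    P.complex.X 0 ⟶ X :=
  P.π.f 0

instance {X : C} (P : ProjectiveResolution X) : Epi (resolutionAugmentation P) :=
  inferInstanceAs (Epi (P.π.f 0))

lemma d_comp_resolutionAugmentation {X : C} (P : ProjectiveResolution X) :
    P.complex.d 1 0 ≫ resolutionAugmentation P = 0 :=
  P.complex_d_comp_π_f_zero

lemma exact_d_resolutionAugmentation {X : C} (P : ProjectiveResolution X) :
    (ShortComplex.mk _ _ (d_comp_resolutionAugmentation P)).Exact :=
  P.exact₀

variable {S : ShortComplex C} [Projective S.X₂] (hS : S.ShortExact)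

/-- The projective resolution `⋯ ⟶ P₁ ⟶ P₀ ⟶ X₂` of `X₃` spliced from a short exact sequence
`0 ⟶ X₁ ⟶ X₂ ⟶ X₃ ⟶ 0` with `X₂` projective and a projective resolution `P` of `X₁`. -/
noncomputable def splicedResolution (P : ProjectiveResolution S.X₁) :
    ProjectiveResolution S.X₃ where
  complex := P.complex.augment (resolutionAugmentation P ≫ S.f)
    (by rw [← Category.assoc, d_comp_resolutionAugmentation, zero_comp])
  projective
    | 0 => ‹Projective S.X₂›
    | n + 1 => P.projective n
  π := (ChainComplex.toSingle₀Equiv _ _).symm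
    ⟨S.g, show (resolutionAugmentation P ≫ S.f) ≫ S.g = 0 by simp⟩
  quasiIso := ⟨fun n => by
    have := hS.mono_f
    have := hS.epi_g
    cases n with
    | zero =>
      rw [ChainComplex.quasiIsoAt₀_iff,
        ShortComplex.quasiIso_iff_of_zeros' _ (by rfl) (by rfl) (by rfl)]
      have w : (resolutionAugmentation P ≫ S.f) ≫ S.g = 0 := by simp
      have hP : (ShortComplex.mk _ _ w).Exact := exact_comp_f_of_epi hS.exact _
      refine (ShortComplex.exact_and_epi_g_iff_of_iso ?_).2 ⟨hP, hS.epi_g⟩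
      refine ShortComplex.isoMk (Iso.refl _) (Iso.refl _) (Iso.refl _) ?_ ?_
      · exact (Category.id_comp _).trans (Category.comp_id _).symm
      · refine (Category.id_comp _).trans (Eq.trans ?_ (Category.comp_id _).symm)
        exact (ChainComplex.toSingle₀Equiv_symm_apply_f_zero
          (C := P.complex.augment _ _) S.g w).symm
    | succ n =>
      rw [quasiIsoAt_iff_exactAt' _ _ (ChainComplex.exactAt_succ_single_obj _ _),
        HomologicalComplex.exactAt_iff' _ (n + 2) (n + 1) n (by simp) (by simp)]
      cases n with
      | zero => exact exact_comp_g_of_mono (exact_d_resolutionAugmentation P) S.f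
      | succ n => exact P.exact_succ n⟩

variable {D : Type u'} [Category.{v'} D] [Abelian D] [HasProjectiveResolutions C] (F : C ⥤ D)
  [F.Additive]

/-- Dimension shifting: `L_{n+2} F(X₃)` is `L_{n+1} F(X₁)` for a short exact sequence
`0 ⟶ X₁ ⟶ X₂ ⟶ X₃ ⟶ 0` with `X₂` projective. -/
noncomputable def leftDerivedShiftIso (n : ℕ) :
    (F.leftDerived (n + 2)).obj S.X₃ ≅ (F.leftDerived (n + 1)).obj S.X₁ :=
  let P := projectiveResolution S.X₁
  (splicedResolution hS P).isoLeftDerivedObj F (n + 2) ≪≫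
    HomologicalComplex.homologyIsoSc' _ (n + 3) (n + 2) (n + 1) (by simp) (by simp) ≪≫
    (HomologicalComplex.homologyIsoSc' ((F.mapHomologicalComplex _).obj P.complex)
      (n + 2) (n + 1) n (by simp) (by simp)).symm ≪≫
    (P.isoLeftDerivedObj F (n + 1)).symm

/-- If the outgoing map of a short complex factors as `p ≫ i` with `p` a cokernel of the incoming
map, then the homology is the kernel of `i`. -/
noncomputable def homologyIsoKernelOfFac {T : ShortComplex D} {Q : D} {p : T.X₂ ⟶ Q}
    {wp : T.f ≫ p = 0} (hp : IsColimit (CokernelCofork.ofπ p wp)) {i : Q ⟶ T.X₃}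
    (fac : p ≫ i = T.g) : T.homology ≅ kernel i :=
  let g' := hp.desc (CokernelCofork.ofπ T.g T.zero)
  have hg' : g' = i :=
    Cofork.IsColimit.hom_ext hp ((hp.fac _ WalkingParallelPair.one).trans fac.symm)
  ShortComplex.RightHomologyData.homologyIso
    { Q := Q, H := kernel g', p := p, ι := kernel.ι g', wp := wp, hp := hp
      wι := kernel.condition g', hι := kernelIsKernel g' } ≪≫ kernelIsoOfEq hg'

/-- `L₁ F(X₃)` is the kernel of `F(X₁) ⟶ F(X₂)` for a right exact functor `F` and a short exact
sequence `0 ⟶ X₁ ⟶ X₂ ⟶ X₃ ⟶ 0` with `X₂` projective. -/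
noncomputable def leftDerivedOneIsoKernel [PreservesFiniteColimits F] :
    (F.leftDerived 1).obj S.X₃ ≅ kernel (F.map S.f) :=
  let P := projectiveResolution S.X₁
  have hP : (ShortComplex.mk (F.map (P.complex.d 1 0))
      (F.map (resolutionAugmentation P)) _).Exact :=
    (exact_d_resolutionAugmentation P).map_of_epi_of_preservesCokernel F inferInstance inferInstance
  (splicedResolution hS P).isoLeftDerivedObj F 1 ≪≫
    HomologicalComplex.homologyIsoSc' _ 2 1 0 (by simp) (by simp) ≪≫
    homologyIsoKernelOfFac (T := ((F.mapHomologicalComplex _).obj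
      (splicedResolution hS P).complex).sc' 2 1 0) hP.gIsCokernel (F.map_comp _ _).symm

end DimensionShift

section Tor

/-- The module `Tor_n^A(M, N)` of unbundled modules, as the derived functor of `M ⊗ -` at `N`. -/
noncomputable abbrev torModule (A : Type u) [CommRing A] (n : ℕ) (M N : Type u) [AddCommGroup M]
    [Module A M] [AddCommGroup N] [Module A N] : ModuleCat.{u} A :=
  ((Tor (ModuleCat.{u} A) n).obj (ModuleCat.of A M)).obj (ModuleCat.of A N)

variable {A : Type u} [CommRing A] (M : Type u) [AddCommGroup M] [Module A M] {K F N : Type u}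
  [AddCommGroup K] [Module A K] [AddCommGroup F] [Module A F] [Module.Projective A F]
  [AddCommGroup N] [Module A N] {i : K →ₗ[A] F} {p : F →ₗ[A] N}

/-- If `0 → K → F → N → 0` is exact and `F` is projective, then `Tor₁(M, N)` is the kernel of
`M ⊗ K → M ⊗ F`. -/
noncomputable def torOneEquivKer (hi : Function.Injective i) (hip : Function.Exact i p)
    (hp : Function.Surjective p) : torModule A 1 M N ≃ₗ[A] LinearMap.ker (i.lTensor M) :=
  have : Projective (ModuleCat.of A F) := (IsProjective.iff_projective F).1 inferInstance
  let T := ModuleCat.shortComplexOfCompEqZero i p hip.linearMap_comp_eq_zero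
  (leftDerivedOneIsoKernel (ModuleCat.shortComplex_shortExact T hip hi hp)
    ((MonoidalCategory.tensoringLeft _).obj (ModuleCat.of A M)) ≪≫
    ModuleCat.kernelIsoKer _).toLinearEquiv

/-- Dimension shifting: if `0 → K → F → N → 0` is exact and `F` is projective, then
`Tor_{n+2}(M, N)` is `Tor_{n+1}(M, K)`. -/
noncomputable def torShiftEquiv (hi : Function.Injective i) (hip : Function.Exact i p)
    (hp : Function.Surjective p) (n : ℕ) : torModule A (n + 2) M N ≃ₗ[A] torModule A (n + 1) M K :=
  have : Projective (ModuleCat.of A F) := (IsProjective.iff_projective F).1 inferInstance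
  let T := ModuleCat.shortComplexOfCompEqZero i p hip.linearMap_comp_eq_zero
  (leftDerivedShiftIso (ModuleCat.shortComplex_shortExact T hip hi hp)
    ((MonoidalCategory.tensoringLeft _).obj (ModuleCat.of A M)) n).toLinearEquiv

end Tor

section Kernel

variable {A X Y Z V W : Type*} [CommRing A] [AddCommGroup X] [Module A X] [AddCommGroup Y]
  [Module A Y] [AddCommGroup Z] [Module A Z] [AddCommGroup V] [Module A V] [AddCommGroup W]
  [Module A W]

lemma exact_submoduleComap_comp_subtype {α : X →ₗ[A] Y} {r : Y →ₗ[A] W} (p : Submodule A Y)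
    (hαr : Function.Exact α r) : Function.Exact (α.submoduleComap p) (r ∘ₗ p.subtype) := by
  rintro ⟨y, hy⟩
  constructor
  · intro h
    obtain ⟨x, rfl⟩ := (hαr y).1 h
    exact ⟨⟨x, hy⟩, rfl⟩
  · rintro ⟨x, hx⟩
    exact hx ▸ hαr.apply_apply_eq_zero (x : X)

lemma exact_comp_ker_subtype {α : X →ₗ[A] Y} {β : Y →ₗ[A] Z} {r : Y →ₗ[A] W} {q : Z →ₗ[A] V}
    {f : W →ₗ[A] V} (hαr : r ∘ₗ α = 0) (hr : Function.Surjective r)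
    (hq : Function.Exact (β ∘ₗ α) q) (hf : f ∘ₗ r = q ∘ₗ β) :
    Function.Exact (r ∘ₗ (LinearMap.ker β).subtype) f := by
  intro w
  constructor
  · intro hw
    obtain ⟨y, rfl⟩ := hr w
    have hqβ : q (β y) = 0 := (LinearMap.congr_fun hf y).symm.trans hw
    obtain ⟨x, hx⟩ := (hq (β y)).1 hqβ
    refine ⟨⟨y - α x, ?_⟩, ?_⟩
    · rw [LinearMap.mem_ker, map_sub, ← hx, LinearMap.comp_apply, sub_self]
    · simpa using LinearMap.congr_fun hαr x
  · rintro ⟨⟨y, hy⟩, rfl⟩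
    simpa [LinearMap.mem_ker.1 hy] using LinearMap.congr_fun hf y

lemma exact_codRestrict_submoduleComap {f : X →ₗ[A] Y} {g : Y →ₗ[A] Z} (p : Submodule A Z)
    (hfg : Function.Exact f g) :
    Function.Exact (f.codRestrict (p.comap g) fun x => by
      rw [Submodule.mem_comap, hfg.apply_apply_eq_zero]
      exact p.zero_mem) (g.submoduleComap p) := by
  rintro ⟨y, hy⟩
  have h := hfg y
  simp only [Set.mem_range, Subtype.ext_iff] at h ⊢
  exact h

lemma exists_ker_comp_presentation {f : X →ₗ[A] Y} {g : Y →ₗ[A] Z} {q : V →ₗ[A] Y}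
    (hf : Function.Injective f) (hfg : Function.Exact f g) (hq : Function.Surjective q) :
    ∃ r : LinearMap.ker (g ∘ₗ q) →ₗ[A] X, f ∘ₗ r = q ∘ₗ (LinearMap.ker (g ∘ₗ q)).subtype ∧
      Function.Exact (Submodule.inclusion (LinearMap.ker_le_ker_comp q g)) r ∧
      Function.Surjective r := by
  let r := (q ∘ₗ (LinearMap.ker (g ∘ₗ q)).subtype).codRestrictOfInjective f hf
    fun x => (hfg _).1 x.2
  have hfr (y) : f (r y) = q y := LinearMap.codRestrictOfInjective_comp_apply _ _ _ _ y
  refine ⟨r, LinearMap.ext hfr, fun y => ?_, fun x => ?_⟩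
  · rw [← map_eq_zero_iff f hf, hfr]
    exact ⟨fun h => ⟨⟨y, h⟩, rfl⟩, by rintro ⟨x, rfl⟩; exact x.2⟩
  · obtain ⟨y, hy⟩ := hq (f x)
    refine ⟨⟨y, ?_⟩, hf ((hfr _).trans hy)⟩
    rw [LinearMap.mem_ker, LinearMap.comp_apply, hy, hfg.apply_apply_eq_zero]

end Kernel

section LowDegree

variable {A : Type u} [CommRing A] (M : Type u) [AddCommGroup M] [Module A M] {X Y Z P N : Type u}
  [AddCommGroup X] [Module A X] [AddCommGroup Y] [Module A Y] [AddCommGroup Z] [Module A Z]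
  [AddCommGroup P] [Module A P] [Module.Projective A P] {f : X →ₗ[A] Y} {g : Y →ₗ[A] Z}

theorem exists_torConnecting_of_presentation {K L : Type u} [AddCommGroup K] [Module A K]
    [AddCommGroup L] [Module A L] {α : K →ₗ[A] L} {β : L →ₗ[A] P} {q : P →ₗ[A] Y} {q' : P →ₗ[A] Z}
    {r : L →ₗ[A] X} (hβα : Function.Injective (β ∘ₗ α)) (hβαq : Function.Exact (β ∘ₗ α) q)
    (hq : Function.Surjective q) (hβ : Function.Injective β) (hβq' : Function.Exact β q')
    (hq' : Function.Surjective q') (hαr : Function.Exact α r) (hr : Function.Surjective r)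
    (hfr : f ∘ₗ r = q ∘ₗ β) :
    ∃ (φ : torModule A 1 M Y →ₗ[A] torModule A 1 M Z) (δ : torModule A 1 M Z →ₗ[A] M ⊗[A] X),
      Function.Exact φ δ ∧ Function.Exact δ (f.lTensor M) := by
  have hker : LinearMap.ker ((β ∘ₗ α).lTensor M) =
      (LinearMap.ker (β.lTensor M)).comap (α.lTensor M) := by
    rw [LinearMap.lTensor_comp, LinearMap.ker_comp]
  let eY := torOneEquivKer M hβα hβαq hq ≪≫ₗ LinearEquiv.ofEq _ _ hker
  let eZ := torOneEquivKer M hβ hβq' hq'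
  have hαr' := lTensor_exact M hαr hr
  let δ := r.lTensor M ∘ₗ (LinearMap.ker (β.lTensor M)).subtype
  have hδ : Function.Exact δ (f.lTensor M) :=
    exact_comp_ker_subtype hαr'.linearMap_comp_eq_zero (LinearMap.lTensor_surjective M hr)
      (by rw [← LinearMap.lTensor_comp]; exact lTensor_exact M hβαq hq)
      (by rw [← LinearMap.lTensor_comp, ← LinearMap.lTensor_comp, hfr])
  have hφδ : Function.Exact ((α.lTensor M).submoduleComap _ ∘ₗ eY.toLinearMap) δ :=
    eY.surjective.comp_exact_iff_exact.2 (exact_submoduleComap_comp_subtype _ hαr')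
  exact ⟨_, δ ∘ₗ eZ.toLinearMap, (LinearEquiv.conj_exact_iff_exact _ _ eZ.symm).2 hφδ,
    eZ.surjective.comp_exact_iff_exact.2 hδ⟩

theorem exists_torConnecting (hf : Function.Injective f) (hfg : Function.Exact f g)
    (hg : Function.Surjective g) :
    ∃ (φ : torModule A 1 M Y →ₗ[A] torModule A 1 M Z) (δ : torModule A 1 M Z →ₗ[A] M ⊗[A] X),
      Function.Exact φ δ ∧ Function.Exact δ (f.lTensor M) := by
  let q : (Y →₀ A) →ₗ[A] Y := Finsupp.linearCombination A id
  have hq : Function.Surjective q := Finsupp.linearCombination_id_surjective A Y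
  obtain ⟨r, hfr, hαr, hr⟩ := exists_ker_comp_presentation hf hfg hq
  exact exists_torConnecting_of_presentation M (K := LinearMap.ker q)
    (L := LinearMap.ker (g ∘ₗ q)) (α := Submodule.inclusion (LinearMap.ker_le_ker_comp q g))
    (β := (LinearMap.ker (g ∘ₗ q)).subtype) (q := q) (q' := g ∘ₗ q) (r := r)
    Subtype.val_injective q.exact_subtype_ker_map hq Subtype.val_injective
    (g ∘ₗ q).exact_subtype_ker_map (hg.comp hq) hαr hr hfr

variable [AddCommGroup N] [Module A N] {p : P →ₗ[A] N}

theorem exists_torSyzygySequence_of_factorization {i : Z →ₗ[A] P} (hf : Function.Injective f)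
    (hfg : Function.Exact f g) (hg : Function.Surjective g) (hi : Function.Injective i)
    (hip : Function.Exact i p) (hp : Function.Surjective p) :
    ∃ (φ₁ : torModule A 1 M Y →ₗ[A] torModule A 2 M N) (φ₂ : torModule A 2 M N →ₗ[A] M ⊗[A] X)
      (φ₃ : M ⊗[A] X →ₗ[A] LinearMap.ker ((i ∘ₗ g).lTensor M))
      (φ₄ : LinearMap.ker ((i ∘ₗ g).lTensor M) →ₗ[A] torModule A 1 M N),
      Function.Exact φ₁ φ₂ ∧ Function.Exact φ₂ φ₃ ∧ Function.Exact φ₃ φ₄ ∧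
      Function.Surjective φ₄ := by
  obtain ⟨φ, δ, hφδ, hδ⟩ := exists_torConnecting M hf hfg hg
  let e₁ := torOneEquivKer M hi hip hp
  let e₂ := torShiftEquiv M hi hip hp 0
  rw [LinearMap.lTensor_comp, LinearMap.ker_comp]
  have hfg' := lTensor_exact M hfg hg
  refine ⟨e₂.symm.toLinearMap ∘ₗ φ, δ ∘ₗ e₂.toLinearMap, _,
    e₁.symm.toLinearMap ∘ₗ (g.lTensor M).submoduleComap _,
    (LinearEquiv.conj_exact_iff_exact _ _ e₂.symm).2 hφδ, ?_,
    e₁.symm.injective.comp_exact_iff_exact.2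
      (exact_codRestrict_submoduleComap (LinearMap.ker (i.lTensor M)) hfg'),
    e₁.symm.surjective.comp (LinearMap.submoduleComap_surjective_of_surjective _ _
      (LinearMap.lTensor_surjective M hg))⟩
  exact e₂.surjective.comp_exact_iff_exact.2
    (((LinearMap.ker (i.lTensor M)).comap
      (g.lTensor M)).injective_subtype.comp_exact_iff_exact.1 hδ)

theorem exists_torSyzygySequence {h : Y →ₗ[A] P} (hf : Function.Injective f)
    (hfh : Function.Exact f h) (hhp : Function.Exact h p) (hp : Function.Surjective p) :
    ∃ (φ₁ : torModule A 1 M Y →ₗ[A] torModule A 2 M N) (φ₂ : torModule A 2 M N →ₗ[A] M ⊗[A] X)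
      (φ₃ : M ⊗[A] X →ₗ[A] LinearMap.ker (h.lTensor M))
      (φ₄ : LinearMap.ker (h.lTensor M) →ₗ[A] torModule A 1 M N),
      Function.Exact φ₁ φ₂ ∧ Function.Exact φ₂ φ₃ ∧ Function.Exact φ₃ φ₄ ∧
      Function.Surjective φ₄ :=
  exists_torSyzygySequence_of_factorization M (g := h.rangeRestrict)
    (i := (LinearMap.range h).subtype) hf
    ((LinearMap.range h).injective_subtype.comp_exact_iff_exact.1 hfh) h.surjective_rangeRestrict
    Subtype.val_injective (fun x => (hhp x).trans (by simp)) hp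

end LowDegree

section HypersurfaceBaseChange

variable {S R K F N : Type*} [CommRing S] [CommRing R] [Algebra S R] [AddCommGroup K] [Module S K]
  [AddCommGroup F] [Module S F] [AddCommGroup N] [Module S N] {f : S} {i : K →ₗ[S] F}
  {p : F →ₗ[S] N}

lemma exact_lsmul_mk_one (hπ : Function.Surjective (algebraMap S R))
    (hker : RingHom.ker (algebraMap S R) = Ideal.span {f}) (K : Type*) [AddCommGroup K]
    [Module S K] : Function.Exact (LinearMap.lsmul S K f) (TensorProduct.mk S R K 1) := by
  have hfR : Function.Exact (LinearMap.lsmul S S f) (Algebra.linearMap S R) := fun x => by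
    rw [Algebra.linearMap_apply, ← RingHom.mem_ker, hker, Ideal.mem_span_singleton, dvd_def]
    simp [eq_comm]
  have hlsmul : LinearMap.lsmul S K f ∘ₗ (TensorProduct.lid S K).toLinearMap =
      (TensorProduct.lid S K).toLinearMap ∘ₗ (LinearMap.lsmul S S f).rTensor K := by
    ext; simp
  have hmk : TensorProduct.mk S R K 1 =
      (Algebra.linearMap S R).rTensor K ∘ₗ (TensorProduct.lid S K).symm.toLinearMap := by
    ext; simp
  rw [← (TensorProduct.lid S K).surjective.comp_exact_iff_exact, hlsmul, hmk]
  exact (LinearEquiv.conj_exact_iff_exact _ _ _).2 (rTensor_exact K hfR hπ)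

lemma baseChange_injective_of_isSMulRegular (hπ : Function.Surjective (algebraMap S R))
    (hker : RingHom.ker (algebraMap S R) = Ideal.span {f}) (hi : Function.Injective i)
    (hip : Function.Exact i p) (hN : IsSMulRegular N f) :
    Function.Injective (i.baseChange R) := by
  rw [injective_iff_map_eq_zero]
  intro z hz
  obtain ⟨x, rfl⟩ := TensorProduct.mk_surjective S K R hπ z
  obtain ⟨y, hy⟩ := (exact_lsmul_mk_one hπ hker F (i x)).1 hz
  have hpy : p y = 0 := hN <| by
    simpa [← hy, eq_comm] using hip.apply_apply_eq_zero x
  obtain ⟨x', rfl⟩ := (hip y).1 hpy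
  refine (exact_lsmul_mk_one hπ hker K x).2 ⟨x', hi ?_⟩
  rw [← hy, LinearMap.lsmul_apply, LinearMap.lsmul_apply, map_smul]

theorem exists_exact_baseChange_of_isSMulRegular (hπ : Function.Surjective (algebraMap S R))
    (hker : RingHom.ker (algebraMap S R) = Ideal.span {f}) [Module R N] [IsScalarTower S R N]
    (hi : Function.Injective i) (hip : Function.Exact i p) (hp : Function.Surjective p)
    (hF : IsSMulRegular F f) :
    ∃ (δ : N →ₗ[R] R ⊗[S] K) (q : R ⊗[S] F →ₗ[R] N), Function.Injective δ ∧
      Function.Exact δ (i.baseChange R) ∧ Function.Exact (i.baseChange R) q ∧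
      Function.Surjective q := by
  have hfN : LinearMap.lsmul S N f = 0 := by
    ext x
    have hf : algebraMap S R f = 0 := by
      rw [← RingHom.mem_ker, hker]
      exact Ideal.mem_span_singleton_self f
    rw [LinearMap.lsmul_apply, ← algebraMap_smul R f x, hf, zero_smul, LinearMap.zero_apply]
  let δ := SnakeLemma.δ' (LinearMap.lsmul S K f) (LinearMap.lsmul S F f) (LinearMap.lsmul S N f)
    i p hip i p hip (by ext; simp) (by ext; simp) LinearMap.id (by simp [hfN, Function.Exact])
    (TensorProduct.mk S R K 1) (exact_lsmul_mk_one hπ hker K) hp hi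
  have hδ : Function.Exact δ (i.lTensor R) :=
    SnakeLemma.exact_δ'_left _ _ _ _ _ _ _ _ _ _ _ _ _ _ _ (TensorProduct.mk S R F 1)
      (exact_lsmul_mk_one hπ hker F) _ _ _ (by ext; simp) (TensorProduct.mk_surjective S K R hπ)
  have hδ' : Function.Exact (0 : Unit →ₗ[S] N) δ :=
    SnakeLemma.exact_δ'_right _ _ _ _ _ _ _ _ _ _ _ (0 : Unit →ₗ[S] F)
      ((LinearMap.exact_zero_iff_injective _ (LinearMap.lsmul S F f)).2 hF) _ _ _ _ _ _ _ (by simp)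
      Function.injective_id
  have : TensorProduct.CompatibleSMul S R R N := .of_algebraMap_surjective _ _ hπ
  let e := TensorProduct.lidOfCompatibleSMul S R N
  exact ⟨δ.extendScalarsOfSurjective hπ, e.toLinearMap ∘ₗ p.baseChange R,
    (LinearMap.exact_zero_iff_injective _ _).1 hδ', hδ,
    e.injective.comp_exact_iff_exact.2 (lTensor_exact R hip hp),
    e.surjective.comp (LinearMap.lTensor_surjective R hp)⟩

end HypersurfaceBaseChange

section TorBaseChange

/-- The isomorphism between the kernels of `M ⊗ (R ⊗ K) → M ⊗ (R ⊗ F)` over `R` and of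
`M ⊗ K → M ⊗ F` over `S` which cancels the base change. -/
noncomputable def kerLTensorBaseChangeEquiv {S K F : Type*} (R M : Type*) [CommRing S] [CommRing R]
    [Algebra S R] [AddCommGroup M] [Module R M] [Module S M] [IsScalarTower S R M]
    [AddCommGroup K] [Module S K] [AddCommGroup F] [Module S F] (i : K →ₗ[S] F) :
    LinearMap.ker ((i.baseChange R).lTensor M) ≃+ LinearMap.ker (i.lTensor M) :=
  let e := TensorProduct.AlgebraTensorModule.cancelBaseChange S R R M K
  let iM := TensorProduct.AlgebraTensorModule.lTensor R M i
  have hker : LinearMap.ker ((i.baseChange R).lTensor M) =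
      (LinearMap.ker iM).comap e.toLinearMap := by
    rw [← LinearMap.ker_comp, TensorProduct.AlgebraTensorModule.lTensor_comp_cancelBaseChange]
    exact (LinearEquiv.ker_comp _ _).symm
  (LinearEquiv.ofEq _ _ hker ≪≫ₗ e.ofSubmodule' (LinearMap.ker iM)).toAddEquiv

/-- If a presentation `0 → L → G → K → 0` over `S` with `G` projective stays exact after base change
to `R`, then `Tor₁^R(M, R ⊗ K)` is `Tor₁^S(M, K)`. -/
noncomputable def torOneBaseChangeEquiv {S R L G K : Type u} [CommRing S] [CommRing R] [Algebra S R]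
    (M : Type u) [AddCommGroup M] [Module R M] [Module S M] [IsScalarTower S R M]
    [AddCommGroup L] [Module S L] [AddCommGroup G] [Module S G] [Module.Projective S G]
    [AddCommGroup K] [Module S K] {j : L →ₗ[S] G} {r : G →ₗ[S] K} (hj : Function.Injective j)
    (hjr : Function.Exact j r) (hr : Function.Surjective r)
    (hjR : Function.Injective (j.baseChange R)) :
    torModule R 1 M (R ⊗[S] K) ≃+ torModule S 1 M K :=
  have hjrR : Function.Exact (j.baseChange R) (r.baseChange R) := lTensor_exact R hjr hr
  have hrR : Function.Surjective (r.baseChange R) := LinearMap.lTensor_surjective R hr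
  (torOneEquivKer M hjR hjrR hrR).toAddEquiv.trans <|
    (kerLTensorBaseChangeEquiv R M j).trans (torOneEquivKer M hj hjr hr).symm.toAddEquiv

end TorBaseChange

section ChangeOfRings

variable {S R : Type u} [CommRing S] [CommRing R] [Algebra S R] {f : S}
  (M N : Type u) [AddCommGroup M] [Module R M] [Module S M] [IsScalarTower S R M]
  [AddCommGroup N] [Module R N] [Module S N] [IsScalarTower S R N]

lemma nonempty_torOneBaseChangeEquiv_of_isSMulRegular
    (hπ : Function.Surjective (algebraMap S R))
    (hker : RingHom.ker (algebraMap S R) = Ideal.span {f}) {K : Type u} [AddCommGroup K]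
    [Module S K] (hK : IsSMulRegular K f) :
    Nonempty (torModule R 1 M (R ⊗[S] K) ≃+ torModule S 1 M K) := by
  let r : (K →₀ S) →ₗ[S] K := Finsupp.linearCombination S id
  have hj : Function.Injective (LinearMap.ker r).subtype := Subtype.val_injective
  have hjr : Function.Exact (LinearMap.ker r).subtype r := r.exact_subtype_ker_map
  have hr : Function.Surjective r := Finsupp.linearCombination_id_surjective S K
  exact ⟨torOneBaseChangeEquiv M hj hjr hr
    (baseChange_injective_of_isSMulRegular (K := LinearMap.ker r) hπ hker hj hjr hK)⟩

theorem exists_torChangeOfRings_of_presentation (hπ : Function.Surjective (algebraMap S R))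
    (hker : RingHom.ker (algebraMap S R) = Ideal.span {f}) {K F : Type u} [AddCommGroup K]
    [Module S K] [AddCommGroup F] [Module S F] [Module.Projective S F] {i : K →ₗ[S] F}
    {p : F →ₗ[S] N} (hi : Function.Injective i) (hip : Function.Exact i p)
    (hp : Function.Surjective p) (hF : IsSMulRegular F f) :
    ∃ (g₁ : torModule S 2 M N →+ torModule R 2 M N) (g₂ : torModule R 2 M N →+ M ⊗[R] N)
      (g₃ : M ⊗[R] N →+ torModule S 1 M N) (g₄ : torModule S 1 M N →+ torModule R 1 M N),
      Function.Exact g₁ g₂ ∧ Function.Exact g₂ g₃ ∧ Function.Exact g₃ g₄ ∧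
      Function.Surjective g₄ := by
  obtain ⟨δ, q, hδ, hδi, hiq, hq⟩ :=
    exists_exact_baseChange_of_isSMulRegular hπ hker hi hip hp hF
  obtain ⟨φ₁, φ₂, φ₃, φ₄, h₁₂, h₂₃, h₃₄, h₄⟩ := exists_torSyzygySequence M hδ hδi hiq hq
  obtain ⟨eK⟩ :=
    nonempty_torOneBaseChangeEquiv_of_isSMulRegular M hπ hker (hF.of_injective i hi)
  let e₂ := (torShiftEquiv M hi hip hp 0).toAddEquiv.trans eK.symm
  let e₁ := (torOneEquivKer M hi hip hp).toAddEquiv.trans (kerLTensorBaseChangeEquiv R M i).symm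
  refine ⟨φ₁.toAddMonoidHom.comp e₂, φ₂.toAddMonoidHom,
    (e₁.symm : _ →+ torModule S 1 M N).comp φ₃.toAddMonoidHom, φ₄.toAddMonoidHom.comp e₁,
    ?_, ?_, ?_, h₄.comp e₁.surjective⟩
  · exact .of_ladder_addEquiv_of_exact e₂.symm (.refl _) (.refl _) (f₁₂ := φ₁.toAddMonoidHom)
      (f₂₃ := φ₂.toAddMonoidHom) (by ext; simp) rfl h₁₂
  · exact h₂₃.comp_injective _ e₁.symm.injective (map_zero _)
  · exact .of_ladder_addEquiv_of_exact (.refl _) e₁.symm (.refl _) (f₁₂ := φ₃.toAddMonoidHom)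
      (f₂₃ := φ₄.toAddMonoidHom) rfl (by ext; simp) h₃₄

theorem stmt_3_general (hπ : Function.Surjective (algebraMap S R))
    (hker : RingHom.ker (algebraMap S R) = Ideal.span {f}) (hf : f ∈ nonZeroDivisors S) :
    ∃ (g₁ : torModule S 2 M N →+ torModule R 2 M N) (g₂ : torModule R 2 M N →+ M ⊗[R] N)
      (g₃ : M ⊗[R] N →+ torModule S 1 M N) (g₄ : torModule S 1 M N →+ torModule R 1 M N),
      Function.Exact g₁ g₂ ∧ Function.Exact g₂ g₃ ∧ Function.Exact g₃ g₄ ∧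
      Function.Surjective g₄ := by
  have hfS : IsSMulRegular (N →₀ S) f := fun x y hxy => Finsupp.ext fun n =>
    (mul_cancel_left_mem_nonZeroDivisors hf).1 (DFunLike.congr_fun hxy n)
  let p : (N →₀ S) →ₗ[S] N := Finsupp.linearCombination S id
  have hp : Function.Surjective p := Finsupp.linearCombination_id_surjective S N
  exact exists_torChangeOfRings_of_presentation (K := LinearMap.ker p) M N hπ hker
    (LinearMap.ker p).injective_subtype p.exact_subtype_ker_map hp hfS

end ChangeOfRings

/-- Let `S` be a commutative Noetherian local ring, `f ∈ S` a non
zero-divisor, `R = S/(f)` (presented by a surjection `π : S → R` with kernel `(f)`),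
and `M`, `N` finitely generated `R`-modules.  Then there is an exact sequence
`Tor₂^S(M,N) → Tor₂^R(M,N) → M ⊗_R N → Tor₁^S(M,N) → Tor₁^R(M,N) → 0`. -/
theorem stmt_3 (S : Type) [CommRing S] [IsNoetherianRing S] [IsLocalRing S]
    (f : S) (hf : f ∈ nonZeroDivisors S)
    (R : Type) [CommRing R] (π : S →+* R) (hπ : Function.Surjective π)
    (hker : RingHom.ker π = Ideal.span {f})
    (M N : Type) [AddCommGroup M] [Module R M] [Module.Finite R M]
    [AddCommGroup N] [Module R N] [Module.Finite R N] :
    letI : Module S M := Module.compHom M π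
    letI : Module S N := Module.compHom N π
    ∃ (g₁ : (((Tor (ModuleCat.{0} S) 2).obj (ModuleCat.of S M)).obj (ModuleCat.of S N)) →+
            (((Tor (ModuleCat.{0} R) 2).obj (ModuleCat.of R M)).obj (ModuleCat.of R N)))
      (g₂ : (((Tor (ModuleCat.{0} R) 2).obj (ModuleCat.of R M)).obj (ModuleCat.of R N)) →+
            (M ⊗[R] N))
      (g₃ : (M ⊗[R] N) →+
            (((Tor (ModuleCat.{0} S) 1).obj (ModuleCat.of S M)).obj (ModuleCat.of S N)))
      (g₄ : (((Tor (ModuleCat.{0} S) 1).obj (ModuleCat.of S M)).obj (ModuleCat.of S N)) →+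
            (((Tor (ModuleCat.{0} R) 1).obj (ModuleCat.of R M)).obj (ModuleCat.of R N))),
      Function.Exact g₁ g₂ ∧ Function.Exact g₂ g₃ ∧ Function.Exact g₃ g₄ ∧
      Function.Surjective g₄ := by
  let : Module S M := Module.compHom M π
  let : Module S N := Module.compHom N π
  let : Algebra S R := π.toAlgebra
  have : IsScalarTower S R M := .of_algebraMap_smul fun _ _ => rfl
  have : IsScalarTower S R N := .of_algebraMap_smul fun _ _ => rfl
  exact stmt_3_general M N hπ hker hf
end

section
/- Let R = C[[x,y]]/(xy(x-y)) and M = R/(x). Then Tor_1^R(M, M) \cong C[[y]]/(y^2) and Tor_2^R(M, M) = 0. -/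
open CategoryTheory MvPowerSeries

noncomputable section

/-- The ring `R = ℂ[[x,y]]/(xy(x-y))`. -/
abbrev R8 : Type :=
  MvPowerSeries (Fin 2) ℂ ⧸
    Ideal.span {(X 0 : MvPowerSeries (Fin 2) ℂ) * X 1 * (X 0 - X 1)}

def x8 : R8 := Ideal.Quotient.mk _ (X 0)
def y8 : R8 := Ideal.Quotient.mk _ (X 1)

/-- `M = R/(x)` -/
abbrev M8 : Type := R8 ⧸ Ideal.span {x8}

/-!
In `R` the elements `x` and `y(x - y)` generate the annihilators of each other, so that
`⋯ → R →[x] R →[y(x-y)] R →[x] R` is a free resolution of `M = R/(x)`. After tensoring with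
`M ≅ ℂ[[y]]`, the element `x` acts by zero and `y(x - y)` acts by `-y²`, which is injective with
cokernel `ℂ[[y]]/(y²)`. The odd `Tor` modules are therefore this cokernel, and the even ones in
positive degrees are the kernel, which is zero.
-/

section LinearCategory

variable {A : Type*} [CommRing A] {C : Type*} [Category* C] [Preadditive C] [Linear A C] {a b : A}

lemma smul_id_comp_smul_id (h : a * b = 0) (X : C) : (a • 𝟙 X) ≫ (b • 𝟙 X) = 0 := by
  simp [smul_smul, mul_comm b a, h]

/-- The short complex `X →[a] X →[b] X` of multiplications by two scalars with product zero. -/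
abbrev mulShortComplex (h : a * b = 0) (X : C) : ShortComplex C :=
  .mk (a • 𝟙 X) (b • 𝟙 X) (smul_id_comp_smul_id h X)

/-- An isomorphism `X ≅ Y` commutes with multiplication by scalars, hence identifies the short
complexes of multiplications on `X` and on `Y`. -/
def mulShortComplexMapIso (h : a * b = 0) {X Y : C} (e : X ≅ Y) :
    mulShortComplex h X ≅ mulShortComplex h Y :=
  ShortComplex.isoMk e e e (by simp) (by simp)

/-- A linear functor carries multiplications by scalars to multiplications by the same scalars. -/
def mapMulShortComplexIso (h : a * b = 0) {D : Type*} [Category* D] [Preadditive D] [Linear A D]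
    (F : C ⥤ D) [F.Additive] [F.Linear A] (X : C) :
    (mulShortComplex h X).map F ≅ mulShortComplex h (F.obj X) :=
  have map_smul_id (c : A) : F.map (c • 𝟙 X) = c • 𝟙 (F.obj X) := by
    rw [F.map_smul, F.map_id]
  ShortComplex.isoMk (.refl _) (.refl _) (.refl _)
    ((Category.id_comp _).trans ((map_smul_id a).symm.trans (Category.comp_id _).symm))
    ((Category.id_comp _).trans ((map_smul_id b).symm.trans (Category.comp_id _).symm))

end LinearCategory

section ModuleHomology

universe u v

variable {A : Type u} [CommRing A] {a b : A} {N : Type v} [AddCommGroup N] [Module A N]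

/-- If `a` annihilates `N`, the homology of `N →[b] N →[a] N` is the cokernel of `b`. -/
def mulShortComplexHomologyIso (h : b * a = 0) (ha : Module.IsTorsionBy A N a) :
    (mulShortComplex h (ModuleCat.of A N)).homology ≅ ModuleCat.of A (QuotSMulTop b N) :=
  (ShortComplex.HomologyData.ofIsColimitCokernelCofork (mulShortComplex h (ModuleCat.of A N))
    (by ext n; exact ha (x := n)) _
    (ModuleCat.smulShortComplex_exact (ModuleCat.of A N) b).gIsCokernel).left.homologyIso

lemma mulShortComplex_exact_of_isSMulRegular (hb : IsSMulRegular N b) (h : a * b = 0) :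
    (mulShortComplex h (ModuleCat.of A N)).Exact := by
  rw [ShortComplex.moduleCat_exact_iff]
  intro n hn
  exact ⟨0, (map_zero _).trans (hb.right_eq_zero_of_smul hn).symm⟩

end ModuleHomology

section QuotientRing

open nonZeroDivisors

variable {S : Type*} [CommRing S] {I : Ideal S} {u v : S}

lemma mk_dvd_mk_iff {w r : S} (h : I ≤ Ideal.span {w}) :
    Ideal.Quotient.mk I w ∣ Ideal.Quotient.mk I r ↔ w ∣ r := by
  refine ⟨fun ⟨s, hs⟩ => ?_, map_dvd _⟩
  obtain ⟨s, rfl⟩ := Ideal.Quotient.mk_surjective s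
  rw [← map_mul, Ideal.Quotient.eq] at hs
  have := Ideal.mem_span_singleton.1 (h hs)
  exact (dvd_sub_left (dvd_mul_right w s)).1 this

lemma mk_mul_eq_zero_iff_mk_dvd (hu : u ∈ S⁰) (hI : I = Ideal.span {u * v}) (r : S ⧸ I) :
    Ideal.Quotient.mk I u * r = 0 ↔ Ideal.Quotient.mk I v ∣ r := by
  subst hI
  obtain ⟨r, rfl⟩ := Ideal.Quotient.mk_surjective r
  rw [mk_dvd_mk_iff (Ideal.span_singleton_le_span_singleton.2 (dvd_mul_left v u)),
    ← map_mul, Ideal.Quotient.eq_zero_iff_mem, Ideal.mem_span_singleton]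
  exact dvd_cancel_left_mem_nonZeroDivisors hu

lemma isSMulRegular_quotient_mk (hv : IsSMulRegular (S ⧸ Ideal.span {u}) v)
    (hI : I ≤ Ideal.span {u}) :
    IsSMulRegular ((S ⧸ I) ⧸ Ideal.span {Ideal.Quotient.mk I u}) (Ideal.Quotient.mk I v) := by
  rw [isSMulRegular_quotient_iff_mem_of_smul_mem] at hv ⊢
  intro r hr
  obtain ⟨r, rfl⟩ := Ideal.Quotient.mk_surjective r
  rw [smul_eq_mul, ← map_mul, Ideal.mem_span_singleton, mk_dvd_mk_iff hI] at hr
  rw [Ideal.mem_span_singleton, mk_dvd_mk_iff hI, ← Ideal.mem_span_singleton]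
  exact hv r (Ideal.mem_span_singleton.2 hr)

lemma span_pair_mul_sub (u v : S) :
    Ideal.span {u, v * (u - v)} = Ideal.span {u, v ^ 2} := by
  rw [show v * (u - v) = -v ^ 2 + v * u by ring, Ideal.span_pair_add_mul_left,
    Ideal.span_pair_neg]

/-- Killing `b` in `S/I` gives `S/(I + (b))`. -/
def quotSMulTopQuotientEquiv (I : Ideal S) (b : S) :
    QuotSMulTop b (S ⧸ I) ≃ₗ[S] S ⧸ (I ⊔ Ideal.span {b}) :=
  Submodule.quotEquivOfEq _ _ (by
      rw [← Submodule.range_mkQ I, ← Submodule.map_top, ← Submodule.map_pointwise_smul,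
        ← Submodule.ideal_span_singleton_smul, smul_eq_mul, Ideal.mul_top]) ≪≫ₗ
    Submodule.quotientQuotientEquivQuotientSup I (Ideal.span {b})

end QuotientRing

/-- An exact pair of zero divisors: each of `a` and `b` generates the annihilator of the other. -/
structure IsExactPair {A : Type*} [CommRing A] (a b : A) : Prop where
  mul_left_eq_zero_iff (r : A) : a * r = 0 ↔ b ∣ r
  mul_right_eq_zero_iff (r : A) : b * r = 0 ↔ a ∣ r

namespace IsExactPair

universe u

variable {A : Type u} [CommRing A] {a b : A}

lemma symm (h : IsExactPair a b) : IsExactPair b a :=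
  ⟨h.mul_right_eq_zero_iff, h.mul_left_eq_zero_iff⟩

lemma mul_eq_zero (h : IsExactPair a b) : a * b = 0 :=
  (h.mul_left_eq_zero_iff b).2 dvd_rfl

open nonZeroDivisors in
lemma of_mem_nonZeroDivisors {S : Type*} [CommRing S] {I : Ideal S} {u v : S}
    (hu : u ∈ S⁰) (hv : v ∈ S⁰) (hI : I = Ideal.span {u * v}) :
    IsExactPair (Ideal.Quotient.mk I u) (Ideal.Quotient.mk I v) where
  mul_left_eq_zero_iff := mk_mul_eq_zero_iff_mk_dvd hu hI
  mul_right_eq_zero_iff := mk_mul_eq_zero_iff_mk_dvd hv (by rw [hI, mul_comm])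

lemma mulShortComplex_exact (h : IsExactPair a b) :
    (mulShortComplex h.mul_eq_zero (ModuleCat.of A A)).Exact := by
  rw [ShortComplex.moduleCat_exact_iff]
  intro r hr
  obtain ⟨s, rfl⟩ := (h.mul_right_eq_zero_iff r).1 hr
  exact ⟨s, rfl⟩

/-- The periodic complex `⋯ →[a] A →[b] A →[a] A` attached to an exact pair. -/
abbrev periodicComplex (h : IsExactPair a b) : ChainComplex (ModuleCat.{u} A) ℕ :=
  HomologicalComplex.alternatingConst (ModuleCat.of A A)
    (smul_id_comp_smul_id h.symm.mul_eq_zero _) (smul_id_comp_smul_id h.mul_eq_zero _)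
    fun _ _ => ComplexShape.down_nat_odd_add

/-- The short complex of the periodic complex around an odd degree. -/
def periodicComplexScIsoOdd (h : IsExactPair a b) {n : ℕ} (hn : Odd n) :
    h.periodicComplex.sc n ≅ mulShortComplex h.symm.mul_eq_zero (ModuleCat.of A A) :=
  HomologicalComplex.alternatingConstScIsoOdd _ _ _ _ (by simp)
    (by cases n <;> simp_all) hn

/-- The short complex of the periodic complex around a positive even degree. -/
def periodicComplexScIsoEven (h : IsExactPair a b) {n : ℕ} (hn : Even n) (hn₀ : n ≠ 0) :
    h.periodicComplex.sc n ≅ mulShortComplex h.mul_eq_zero (ModuleCat.of A A) :=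
  HomologicalComplex.alternatingConstScIsoEven _ _ _ _ (by simp)
    (by cases n <;> simp_all) hn

lemma periodicComplex_exactAt (h : IsExactPair a b) {n : ℕ} (hn : n ≠ 0) :
    h.periodicComplex.ExactAt n := by
  rcases n.even_or_odd with h_even | h_odd
  · exact (ShortComplex.exact_iff_of_iso (h.periodicComplexScIsoEven h_even hn)).2
      h.mulShortComplex_exact
  · exact (ShortComplex.exact_iff_of_iso (h.periodicComplexScIsoOdd h_odd)).2
      h.symm.mulShortComplex_exact

lemma periodicComplex_d_one_zero (h : IsExactPair a b) :
    h.periodicComplex.d 1 0 = a • 𝟙 (ModuleCat.of A A) := by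
  simp only [HomologicalComplex.alternatingConst_d, ComplexShape.down_Rel, zero_add, ↓reduceIte,
    Nat.not_even_one]
  rfl

/-- The augmentation of the periodic complex by the quotient map `A → A/(a)`. -/
def augmentation (h : IsExactPair a b) :
    h.periodicComplex ⟶
      (ChainComplex.single₀ _).obj (ModuleCat.of A (A ⧸ Ideal.span {a})) :=
  (h.periodicComplex.toSingle₀Equiv _).symm ⟨ModuleCat.ofHom (Ideal.span {a}).mkQ, by
    rw [periodicComplex_d_one_zero]
    ext
    exact (Submodule.Quotient.mk_eq_zero _).2
      (Ideal.mul_mem_right _ _ (Ideal.mem_span_singleton_self a))⟩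

lemma augmentation_f_zero (h : IsExactPair a b) :
    h.augmentation.f 0 = ModuleCat.ofHom (Ideal.span {a}).mkQ :=
  ChainComplex.toSingle₀Equiv_symm_apply_f_zero _ _

instance quasiIso_augmentation (h : IsExactPair a b) : QuasiIso h.augmentation where
  quasiIsoAt
    | 0 => by
      rw [ChainComplex.quasiIsoAt₀_iff, ShortComplex.quasiIso_iff_of_zeros' _ rfl rfl rfl]
      constructor
      · rw [ShortComplex.moduleCat_exact_iff]
        intro r hr
        change h.augmentation.f 0 r = 0 at hr
        change ∃ s, h.periodicComplex.d 1 0 s = r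
        rw [augmentation_f_zero] at hr
        rw [periodicComplex_d_one_zero]
        obtain ⟨s, rfl⟩ := Ideal.mem_span_singleton.1 ((Submodule.Quotient.mk_eq_zero _).1 hr)
        exact ⟨s, rfl⟩
      · change Epi (h.augmentation.f 0)
        rw [ModuleCat.epi_iff_surjective, augmentation_f_zero]
        exact (Ideal.span {a}).mkQ_surjective
    | n + 1 => by
      rw [quasiIsoAt_iff_exactAt' (hL := ChainComplex.exactAt_succ_single_obj ..)]
      exact h.periodicComplex_exactAt n.succ_ne_zero

/-- The periodic free resolution of `A/(a)` attached to an exact pair `a`, `b`. -/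
def resolution (h : IsExactPair a b) :
    ProjectiveResolution (ModuleCat.of A (A ⧸ Ideal.span {a})) where
  complex := h.periodicComplex
  projective _ := inferInstanceAs <| Projective (ModuleCat.of A A)
  π := h.augmentation

section LeftDerived

variable {D : Type*} [Category* D] [Abelian D] [Linear A D]
  (F : ModuleCat.{u} A ⥤ D) [F.Additive] [F.Linear A]

/-- The value at `A/(a)` of an odd left derived functor of `F`, as the homology of
multiplications on `F(A)`. -/
def leftDerivedObjIsoOdd (h : IsExactPair a b) {n : ℕ} (hn : Odd n) :
    (F.leftDerived n).obj (ModuleCat.of A (A ⧸ Ideal.span {a})) ≅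
      (mulShortComplex h.symm.mul_eq_zero (F.obj (ModuleCat.of A A))).homology :=
  h.resolution.isoLeftDerivedObj F n ≪≫ ShortComplex.homologyMapIso
    (F.mapShortComplex.mapIso (h.periodicComplexScIsoOdd hn) ≪≫ mapMulShortComplexIso _ F _)

/-- The value at `A/(a)` of an even left derived functor of `F`, in positive degree. -/
def leftDerivedObjIsoEven (h : IsExactPair a b) {n : ℕ} (hn : Even n) (hn₀ : n ≠ 0) :
    (F.leftDerived n).obj (ModuleCat.of A (A ⧸ Ideal.span {a})) ≅
      (mulShortComplex h.mul_eq_zero (F.obj (ModuleCat.of A A))).homology :=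
  h.resolution.isoLeftDerivedObj F n ≪≫ ShortComplex.homologyMapIso
    (F.mapShortComplex.mapIso (h.periodicComplexScIsoEven hn hn₀) ≪≫ mapMulShortComplexIso _ F _)

end LeftDerived

open MonoidalCategory in
/-- The odd `Tor` modules of `N` and `A/(a)`, computed from the periodic resolution. -/
def torIsoOdd (h : IsExactPair a b) {n : ℕ} (hn : Odd n) (N : ModuleCat.{u} A) :
    ((Tor (ModuleCat.{u} A) n).obj N).obj (ModuleCat.of A (A ⧸ Ideal.span {a})) ≅
      (mulShortComplex h.symm.mul_eq_zero N).homology :=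
  h.leftDerivedObjIsoOdd ((tensoringLeft _).obj N) hn ≪≫
    ShortComplex.homologyMapIso (mulShortComplexMapIso _ (ρ_ N))

open MonoidalCategory in
/-- The even `Tor` modules of `N` and `A/(a)`, computed from the periodic resolution; degree
zero is excluded because the resolution stops there. -/
def torIsoEven (h : IsExactPair a b) {n : ℕ} (hn : Even n) (hn₀ : n ≠ 0) (N : ModuleCat.{u} A) :
    ((Tor (ModuleCat.{u} A) n).obj N).obj (ModuleCat.of A (A ⧸ Ideal.span {a})) ≅
      (mulShortComplex h.mul_eq_zero N).homology :=
  h.leftDerivedObjIsoEven ((tensoringLeft _).obj N) hn hn₀ ≪≫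
    ShortComplex.homologyMapIso (mulShortComplexMapIso _ (ρ_ N))

/-- If `a` annihilates `N`, the odd `Tor` modules of `N` and `A/(a)` are `N/bN`. -/
def torIsoQuotSMulTop (h : IsExactPair a b) {n : ℕ} (hn : Odd n) {N : Type u} [AddCommGroup N]
    [Module A N] (ha : Module.IsTorsionBy A N a) :
    ((Tor (ModuleCat.{u} A) n).obj (ModuleCat.of A N)).obj
      (ModuleCat.of A (A ⧸ Ideal.span {a})) ≅ ModuleCat.of A (QuotSMulTop b N) :=
  h.torIsoOdd hn _ ≪≫ mulShortComplexHomologyIso _ ha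

lemma subsingleton_tor_of_isSMulRegular (h : IsExactPair a b) {n : ℕ} (hn : Even n) (hn₀ : n ≠ 0)
    {N : Type u} [AddCommGroup N] [Module A N] (hb : IsSMulRegular N b) :
    Subsingleton (((Tor (ModuleCat.{u} A) n).obj (ModuleCat.of A N)).obj
      (ModuleCat.of A (A ⧸ Ideal.span {a}))) :=
  ModuleCat.subsingleton_of_isZero <|
    ((ShortComplex.exact_iff_isZero_homology _).1
      (mulShortComplex_exact_of_isSMulRegular hb h.mul_eq_zero)).of_iso (h.torIsoEven hn hn₀ _)

/-- The odd `Tor` modules of `A/(a)` with itself are `A/(a, b)`. -/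
def torSelfIso (h : IsExactPair a b) {n : ℕ} (hn : Odd n) :
    ((Tor (ModuleCat.{u} A) n).obj (ModuleCat.of A (A ⧸ Ideal.span {a}))).obj
      (ModuleCat.of A (A ⧸ Ideal.span {a})) ≅ ModuleCat.of A (A ⧸ Ideal.span {a, b}) :=
  h.torIsoQuotSMulTop hn
      ((Module.isTorsionBy_quotient_iff _ a).2 fun r =>
        Ideal.mul_mem_right r _ (Ideal.mem_span_singleton_self a)) ≪≫
    (quotSMulTopQuotientEquiv _ b ≪≫ₗ
      Submodule.quotEquivOfEq _ _ (Ideal.span_insert a {b}).symm).toModuleIso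

end IsExactPair

section PowerSeries

open nonZeroDivisors

variable {σ k : Type*} [CommRing k] {i j : σ}

lemma X_dvd_of_X_dvd_X_mul (hij : i ≠ j) {f : MvPowerSeries σ k}
    (h : (X i : MvPowerSeries σ k) ∣ X j * f) : X i ∣ f := by
  rw [X_dvd_iff] at h ⊢
  intro m hm
  have := h (Finsupp.single j 1 + m) (by simp [hm, hij])
  simpa [X, coeff_add_monomial_mul] using this

lemma isSMulRegular_X_mul_X_sub_X (hij : i ≠ j) :
    IsSMulRegular (MvPowerSeries σ k ⧸ Ideal.span {(X i : MvPowerSeries σ k)})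
      (X j * (X i - X j) : MvPowerSeries σ k) := by
  rw [isSMulRegular_quotient_iff_mem_of_smul_mem]
  intro f hf
  rw [smul_eq_mul, Ideal.mem_span_singleton, mul_assoc] at hf
  have h_sq : (X i : MvPowerSeries σ k) ∣ X j * f := by
    have := X_dvd_of_X_dvd_X_mul hij hf
    rwa [sub_mul, dvd_sub_right (dvd_mul_right _ _)] at this
  exact Ideal.mem_span_singleton.2 (X_dvd_of_X_dvd_X_mul hij h_sq)

lemma X_sub_X_mem_nonZeroDivisors (hij : i ≠ j) :
    (X i - X j : MvPowerSeries σ k) ∈ (MvPowerSeries σ k)⁰ := by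
  rw [mem_nonZeroDivisors_iff_left]
  intro f hf
  -- Cancelling `X i` in `X i * f = X j * f` moves one exponent from `j` to `i` until none is left.
  have h_eq : X i * f = X j * f := by rw [← sub_eq_zero, ← sub_mul, hf]
  have h_coeff (m : σ →₀ ℕ) : coeff m f = coeff (Finsupp.single i 1 + m) (X j * f) := by
    rw [← h_eq, X, coeff_add_monomial_mul, one_mul]
  ext m
  induction hm : m j generalizing m with
  | zero =>
    have : (X j : MvPowerSeries σ k) ∣ X j * f := dvd_mul_right _ _
    rw [h_coeff, X_dvd_iff.1 this _ (by simp [hij, hm]), map_zero]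
  | succ n ih =>
    obtain ⟨m, rfl⟩ : ∃ m', m = Finsupp.single j 1 + m' :=
      le_iff_exists_add.1 (by simp [hm])
    rw [h_coeff, add_left_comm, X, coeff_add_monomial_mul, one_mul]
    exact ih _ (by simpa [hij, add_comm 1] using hm)

end PowerSeries

section ThreeLines

universe u

/-- The ring `k[[x,y]]/(xy(x-y))` of three concurrent lines; `R8` is the case `k = ℂ`. -/
abbrev ThreeLines (k : Type u) [CommRing k] : Type u :=
  MvPowerSeries (Fin 2) k ⧸ Ideal.span {(X 0 : MvPowerSeries (Fin 2) k) * X 1 * (X 0 - X 1)}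

namespace ThreeLines

variable (k : Type u) [CommRing k]

/-- The class of the coordinate `x`. -/
def x : ThreeLines k := Ideal.Quotient.mk _ (X 0)

/-- The class of the coordinate `y`. -/
def y : ThreeLines k := Ideal.Quotient.mk _ (X 1)

lemma y_mul_x_sub_y : y k * (x k - y k) = Ideal.Quotient.mk _ (X 1 * (X 0 - X 1)) := by
  rw [map_mul, map_sub]
  rfl

lemma isExactPair : IsExactPair (x k) (y k * (x k - y k)) := by
  rw [y_mul_x_sub_y]
  exact .of_mem_nonZeroDivisors X_mem_nonzeroDivisors
    (mul_mem X_mem_nonzeroDivisors (X_sub_X_mem_nonZeroDivisors Fin.zero_ne_one))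
    (by rw [mul_assoc])

/-- The branch `x = 0`, as a module over the ring of the three lines; `M8` is the case `k = ℂ`. -/
abbrev Branch : Type u := ThreeLines k ⧸ Ideal.span {x k}

lemma isSMulRegular_y_mul_x_sub_y : IsSMulRegular (Branch k) (y k * (x k - y k)) := by
  rw [y_mul_x_sub_y]
  refine isSMulRegular_quotient_mk (isSMulRegular_X_mul_X_sub_X Fin.zero_ne_one) ?_
  rw [Ideal.span_singleton_le_span_singleton, mul_assoc]
  exact dvd_mul_right _ _

end ThreeLines

open ThreeLines in
theorem stmt_8_general (k : Type u) [CommRing k] (n : ℕ) :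
    (Odd n → Nonempty (((Tor (ModuleCat.{u} (ThreeLines k)) n).obj
        (ModuleCat.of (ThreeLines k) (Branch k))).obj (ModuleCat.of (ThreeLines k) (Branch k)) ≅
      ModuleCat.of (ThreeLines k) (ThreeLines k ⧸ Ideal.span {x k, y k ^ 2}))) ∧
    (Even n → n ≠ 0 → Subsingleton (((Tor (ModuleCat.{u} (ThreeLines k)) n).obj
      (ModuleCat.of (ThreeLines k) (Branch k))).obj (ModuleCat.of (ThreeLines k) (Branch k)))) := by
  rw [← span_pair_mul_sub]
  exact ⟨fun h_odd => ⟨(isExactPair k).torSelfIso h_odd⟩, fun h_even hn₀ =>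
    (isExactPair k).subsingleton_tor_of_isSMulRegular h_even hn₀ (isSMulRegular_y_mul_x_sub_y k)⟩

end ThreeLines

/-- For `R = ℂ[[x,y]]/(xy(x-y))` and `M = R/(x)` one has
`Tor₁^R(M,M) ≅ ℂ[[y]]/(y²)` (as an `R`-module, `ℂ[[y]]/(y²) = R/(x,y²)`) and
`Tor₂^R(M,M) = 0`. -/
theorem stmt_8 :
    Nonempty ((((Tor (ModuleCat.{0} R8) 1).obj (ModuleCat.of R8 M8)).obj
        (ModuleCat.of R8 M8)) ≅ ModuleCat.of R8 (R8 ⧸ Ideal.span {x8, y8 ^ 2})) ∧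
    Subsingleton (((Tor (ModuleCat.{0} R8) 2).obj (ModuleCat.of R8 M8)).obj
        (ModuleCat.of R8 M8)) :=
  ⟨(stmt_8_general ℂ 1).1 odd_one, (stmt_8_general ℂ 2).2 even_two two_ne_zero⟩
end
end

section
/- Let R be a one-dimensional Cohen-Macaulay local ring with associated primes p_1, ..., p_n, and let M be a finitely generated R-module. Then the class [M] is zero in the reduced rationalized Grothendieck group G(R)/Z[R] \otimes Q if and only if there exists a rational number r such that length_{R_{p_j}}(M_{p_j}) = r \cdot length_{R_{p_j}}(R_{p_j}) for every j. -/
open CategoryTheory IsLocalRing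

open scoped TensorProduct

noncomputable section

variable (R : Type) [CommRing R]

/-- Objects: finitely generated `R`-modules (in `Type 0`). -/
def FGMod : Type 1 := {M : ModuleCat.{0} R // Module.Finite R M}

/-- The subgroup of relations coming from short exact sequences. -/
def grothRels : AddSubgroup (FreeAbelianGroup (FGMod R)) :=
  AddSubgroup.closure {x | ∃ (A B C : FGMod R) (f : A.1 →ₗ[R] B.1) (g : B.1 →ₗ[R] C.1),
    Function.Injective f ∧ Function.Surjective g ∧ Function.Exact f g ∧
    x = FreeAbelianGroup.of B - FreeAbelianGroup.of A - FreeAbelianGroup.of C}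

/-- The Grothendieck group of finitely generated `R`-modules. -/
def GGroup : Type 1 := FreeAbelianGroup (FGMod R) ⧸ grothRels R

instance : AddCommGroup (GGroup R) :=
  inferInstanceAs (AddCommGroup (FreeAbelianGroup (FGMod R) ⧸ grothRels R))

/-- The class `[M]` of a finitely generated module in the Grothendieck group. -/
def gclass (M : Type) [AddCommGroup M] [Module R M] [hM : Module.Finite R M] :
    GGroup R :=
  QuotientAddGroup.mk (FreeAbelianGroup.of
    ⟨ModuleCat.of R M, by exact hM⟩)

/-- The reduced Grothendieck group `G(R)/ℤ·[R]`. -/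
def GBar : Type 1 := GGroup R ⧸ AddSubgroup.zmultiples (gclass R R)

instance : AddCommGroup (GBar R) :=
  inferInstanceAs (AddCommGroup (GGroup R ⧸ AddSubgroup.zmultiples (gclass R R)))

/-- The class of `M` in the reduced rationalized Grothendieck group
`(G(R)/ℤ[R]) ⊗_ℤ ℚ`. -/
def gbarQClass (M : Type) [AddCommGroup M] [Module R M] [Module.Finite R M] :
    ℚ ⊗[ℤ] GBar R :=
  (1 : ℚ) ⊗ₜ[ℤ] (QuotientAddGroup.mk (gclass R M) : GBar R)

end

/-- The length of a module: the Krull dimension of its lattice of submodules. -/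
noncomputable def moduleLength (A : Type) [CommRing A]
    (M : Type) [AddCommGroup M] [Module A M] : WithBot (WithTop ℕ) :=
  Order.krullDim (Submodule A M)

/-!
Dévissage shows that `G(R)` is generated by the classes `[R/q]` with `q` prime. For `p` minimal,
the length of `M_p` defines a homomorphism `G(R) → ℤ` taking `[R/p]` to `1` and every other
`[R/q]` to `0`, so an element of `G(R)` is determined by these local lengths up to a multiple of
the class `[k]` of the residue field. If `x` is a nonzerodivisor in the maximal ideal, then
`[R/(x)] = [R] - [R] = 0`, while `[R/(x)]` is a positive multiple of `[k]`; hence `[k]` is torsion,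
and the torsion elements of `G(R)` are those with all local lengths zero. Finally, `[M]` vanishes
in `(G(R)/ℤ[R]) ⊗ ℚ` iff some `n[M] - m[R]` with `n > 0` is torsion.
-/

section GrothendieckGroup

variable {R : Type} [CommRing R]

lemma gclass_eq_add_of_exact {A B C : Type} [AddCommGroup A] [Module R A] [Module.Finite R A]
    [AddCommGroup B] [Module R B] [Module.Finite R B]
    [AddCommGroup C] [Module R C] [Module.Finite R C] {f : A →ₗ[R] B} {g : B →ₗ[R] C}
    (hf : Function.Injective f) (hg : Function.Surjective g) (h : Function.Exact f g) :
    gclass R B = gclass R A + gclass R C := by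
  have relation : gclass R B - gclass R A - gclass R C = 0 :=
    (QuotientAddGroup.eq_zero_iff _).2 (AddSubgroup.subset_closure
      ⟨⟨.of R A, ‹_›⟩, ⟨.of R B, ‹_›⟩, ⟨.of R C, ‹_›⟩, f, g, hf, hg, h, rfl⟩)
  rwa [sub_sub, sub_eq_zero] at relation

lemma gclass_eq_add_quotient {M : Type} [AddCommGroup M] [Module R M] [Module.Finite R M]
    (N : Submodule R M) [Module.Finite R N] : gclass R M = gclass R N + gclass R (M ⧸ N) :=
  gclass_eq_add_of_exact N.injective_subtype N.mkQ_surjective (LinearMap.exact_subtype_mkQ N)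

lemma gclass_of_subsingleton (A : Type) [AddCommGroup A] [Module R A] [Module.Finite R A]
    [Subsingleton A] : gclass R A = 0 := by
  simpa using gclass_eq_add_of_exact (R := R) (f := (0 : A →ₗ[R] A)) (g := (0 : A →ₗ[R] A))
    (Function.injective_of_subsingleton _) (Function.surjective_to_subsingleton _)
    ((LinearMap.exact_zero_iff_surjective _ _).2 (Function.surjective_to_subsingleton _))

lemma gclass_congr {A B : Type} [AddCommGroup A] [Module R A] [Module.Finite R A]
    [AddCommGroup B] [Module R B] [Module.Finite R B] (e : A ≃ₗ[R] B) :
    gclass R A = gclass R B := by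
  rw [gclass_eq_add_of_exact (g := (0 : B →ₗ[R] PUnit)) e.injective
    (Function.surjective_to_subsingleton _)
    ((e.toLinearMap.exact_zero_iff_surjective _).2 e.surjective),
    gclass_of_subsingleton PUnit, add_zero]

lemma gclass_quotient_range_eq_zero {M : Type} [AddCommGroup M] [Module R M] [Module.Finite R M]
    {f : M →ₗ[R] M} (hf : Function.Injective f) : gclass R (M ⧸ LinearMap.range f) = 0 := by
  simpa using gclass_eq_add_of_exact hf (Submodule.mkQ_surjective _) (f.exact_map_mkQ_range)

/-- The universal property of the Grothendieck group: the homomorphism out of `GGroup R` induced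
by a function on finitely generated modules that is additive on short exact sequences. -/
def GGroup.lift {G : Type*} [AddCommGroup G] (φ : FGMod R → G)
    (hφ : ∀ (A B C : FGMod R) (f : A.1 →ₗ[R] B.1) (g : B.1 →ₗ[R] C.1),
      Function.Injective f → Function.Surjective g → Function.Exact f g → φ B = φ A + φ C) :
    GGroup R →+ G :=
  QuotientAddGroup.lift (grothRels R) (FreeAbelianGroup.lift φ) <|
    (AddSubgroup.closure_le _).2 <| by
      rintro _ ⟨A, B, C, f, g, hf, hg, h, rfl⟩
      simp [hφ A B C f g hf hg h]

lemma GGroup.lift_gclass {G : Type*} [AddCommGroup G] (φ : FGMod R → G)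
    (hφ : ∀ (A B C : FGMod R) (f : A.1 →ₗ[R] B.1) (g : B.1 →ₗ[R] C.1),
      Function.Injective f → Function.Surjective g → Function.Exact f g → φ B = φ A + φ C)
    (M : Type) [AddCommGroup M] [Module R M] [hM : Module.Finite R M] :
    GGroup.lift φ hφ (gclass R M) = φ ⟨ModuleCat.of R M, hM⟩ :=
  FreeAbelianGroup.lift_apply_of _ _

lemma GGroup.closure_range_gclass_quotient_prime [IsNoetherianRing R] :
    AddSubgroup.closure (Set.range fun q : PrimeSpectrum R ↦ gclass R (R ⧸ q.asIdeal)) = ⊤ := by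
  set H := AddSubgroup.closure (Set.range fun q : PrimeSpectrum R ↦ gclass R (R ⧸ q.asIdeal))
  have gclass_mem (M : Type) [AddCommGroup M] [Module R M] [hM : Module.Finite R M] :
      gclass R M ∈ H := by
    induction hM using IsNoetherianRing.induction_on_isQuotientEquivQuotientPrime R with
    | subsingleton N => exact gclass_of_subsingleton (R := R) N ▸ H.zero_mem
    | quotient N q e => exact gclass_congr e ▸ AddSubgroup.subset_closure ⟨q, rfl⟩
    | exact A B C f g hf hg h hA hC => exact gclass_eq_add_of_exact hf hg h ▸ H.add_mem hA hC
  refine (AddSubgroup.eq_top_iff' H).2 fun z ↦ ?_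
  obtain ⟨y, rfl⟩ := QuotientAddGroup.mk_surjective z
  induction y using FreeAbelianGroup.induction_on with
  | zero => exact H.zero_mem
  | of M =>
    have : Module.Finite R M.1 := M.2
    exact gclass_mem M.1
  | neg M hM => exact H.neg_mem hM
  | add y₁ y₂ h₁ h₂ => exact H.add_mem h₁ h₂

end GrothendieckGroup

section RationalVanishing

lemma one_tmul_eq_zero_iff_isOfFinAddOrder {A : Type*} [AddCommGroup A] (x : A) :
    (1 : ℚ) ⊗ₜ[ℤ] x = 0 ↔ IsOfFinAddOrder x := by
  have : IsLocalizedModule (nonZeroDivisors ℤ) (TensorProduct.mk ℤ ℚ A 1) :=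
    (isLocalizedModule_iff_isBaseChange (nonZeroDivisors ℤ) ℚ _).2
      (TensorProduct.isBaseChange ℤ A ℚ)
  rw [← TensorProduct.mk_apply, IsLocalizedModule.eq_zero_iff (nonZeroDivisors ℤ),
    isOfFinAddOrder_iff_zsmul_eq_zero]
  simp [Submonoid.smul_def]

lemma isOfFinAddOrder_mk_zmultiples_iff {A : Type*} [AddCommGroup A] (x y : A) :
    IsOfFinAddOrder (QuotientAddGroup.mk x : A ⧸ AddSubgroup.zmultiples y) ↔
      ∃ n : ℕ, 0 < n ∧ ∃ m : ℤ, IsOfFinAddOrder (n • x - m • y) := by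
  have nsmul_mk_eq_zero_iff (n : ℕ) :
      n • (QuotientAddGroup.mk x : A ⧸ AddSubgroup.zmultiples y) = 0 ↔ ∃ m : ℤ, m • y = n • x := by
    rw [← QuotientAddGroup.mk_nsmul, QuotientAddGroup.eq_zero_iff, AddSubgroup.mem_zmultiples_iff]
  simp only [isOfFinAddOrder_iff_nsmul_eq_zero (x := (QuotientAddGroup.mk x : A ⧸ _)),
    nsmul_mk_eq_zero_iff]
  constructor
  · rintro ⟨n, hn, m, hm⟩
    exact ⟨n, hn, m, by simp [hm]⟩
  · rintro ⟨n, hn, m, h⟩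
    obtain ⟨k, hk, hk0⟩ := h.exists_nsmul_eq_zero
    refine ⟨k * n, Nat.mul_pos hk hn, k * m, ?_⟩
    rw [smul_sub, sub_eq_zero] at hk0
    rw [mul_smul, mul_smul, hk0, natCast_zsmul]

lemma gbarQClass_eq_zero_iff {R : Type} [CommRing R] (M : Type) [AddCommGroup M] [Module R M]
    [Module.Finite R M] :
    gbarQClass R M = 0 ↔
      ∃ n : ℕ, 0 < n ∧ ∃ m : ℤ, IsOfFinAddOrder (n • gclass R M - m • gclass R R) :=
  (one_tmul_eq_zero_iff_isOfFinAddOrder (A := GBar R) _).trans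
    (isOfFinAddOrder_mk_zmultiples_iff _ _)

lemma exists_nat_mul_eq_int_mul_iff_exists_rat {ι : Type*} (a b : ι → ℕ) :
    (∃ n : ℕ, 0 < n ∧ ∃ m : ℤ, ∀ i, (n * a i : ℤ) = m * b i) ↔
      ∃ r : ℚ, ∀ i, (a i : ℚ) = r * b i := by
  constructor
  · rintro ⟨n, hn, m, h⟩
    refine ⟨m / n, fun i ↦ ?_⟩
    have hi : (n * a i : ℚ) = m * b i := by exact_mod_cast h i
    field_simp
    rwa [mul_comm]
  · rintro ⟨r, h⟩
    refine ⟨r.den, r.den_pos, r.num, fun i ↦ ?_⟩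
    have hi : (r.den * a i : ℚ) = r.num * b i := by rw [h i, ← mul_assoc, Rat.den_mul_eq_num]
    exact_mod_cast hi

end RationalVanishing

section LocalLength

variable {R : Type*} [CommRing R] (p : Ideal R) [p.IsPrime]

/-- The length of the localization `M_p` over `R_p`, with value `0` when that length is infinite. -/
noncomputable def localLength (M : Type*) [AddCommGroup M] [Module R M] : ℕ :=
  (Module.length (Localization p.primeCompl) (LocalizedModule p.primeCompl M)).toNat

lemma coe_localLength [IsArtinianRing (Localization p.primeCompl)] (M : Type*) [AddCommGroup M]
    [Module R M] [Module.Finite R M] :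
    (localLength p M : ℕ∞) =
      Module.length (Localization p.primeCompl) (LocalizedModule p.primeCompl M) :=
  ENat.natCast_toNat Module.length_ne_top

lemma localLength_eq_add_of_exact [IsArtinianRing (Localization p.primeCompl)] {A B C : Type*}
    [AddCommGroup A] [Module R A] [Module.Finite R A]
    [AddCommGroup B] [Module R B] [Module.Finite R B]
    [AddCommGroup C] [Module R C] [Module.Finite R C] {f : A →ₗ[R] B} {g : B →ₗ[R] C}
    (hf : Function.Injective f) (hg : Function.Surjective g) (h : Function.Exact f g) :
    localLength p B = localLength p A + localLength p C := by
  have length_add := Module.length_eq_add_of_exact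
    (LocalizedModule.map p.primeCompl f) (LocalizedModule.map p.primeCompl g)
    (LocalizedModule.map_injective _ _ hf) (LocalizedModule.map_surjective _ _ hg)
    (LocalizedModule.map_exact _ _ _ h)
  simp only [← coe_localLength] at length_add
  exact_mod_cast length_add

lemma localLength_quotient_eq_zero {q : Ideal R} (hqp : ¬ q ≤ p) : localLength p (R ⧸ q) = 0 := by
  have : Subsingleton (LocalizedModule p.primeCompl (R ⧸ q)) := by
    refine (Module.notMem_support_iff (p := ⟨p, ‹_›⟩)).1 ?_
    rwa [Module.mem_support_iff_of_finite, Ideal.annihilator_quotient]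
  simp [localLength]

lemma localized_primeCompl_eq_maximalIdeal :
    Submodule.localized p.primeCompl p = maximalIdeal (Localization p.primeCompl) := by
  rw [← Localization.AtPrime.map_eq_maximalIdeal]
  exact Submodule.localized'_eq_span _ _ _ _

lemma isSimpleModule_localizedModule_quotient_self :
    IsSimpleModule (Localization p.primeCompl) (LocalizedModule p.primeCompl (R ⧸ p)) := by
  rw [← (localizedQuotientEquiv p.primeCompl p).isSimpleModule_iff, isSimpleModule_iff_isCoatom,
    localized_primeCompl_eq_maximalIdeal]
  exact (maximalIdeal.isMaximal (Localization p.primeCompl)).out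

lemma localLength_quotient_self : localLength p (R ⧸ p) = 1 := by
  have := isSimpleModule_localizedModule_quotient_self p
  simp [localLength]

lemma isArtinianRing_localization_of_mem_minimalPrimes [IsNoetherianRing R]
    (hp : p ∈ minimalPrimes R) : IsArtinianRing (Localization p.primeCompl) :=
  isArtinianRing_iff_krullDimLE_zero.2 (.of_isLocalization p hp _)

end LocalLength

lemma moduleLength_localizedModule {R : Type} [CommRing R] (p : Ideal R) [p.IsPrime]
    [IsArtinianRing (Localization p.primeCompl)] (M : Type) [AddCommGroup M] [Module R M]
    [Module.Finite R M] :
    moduleLength (Localization p.primeCompl) (LocalizedModule p.primeCompl M) =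
      (localLength p M : WithBot (WithTop ℕ)) := by
  rw [moduleLength, ← Module.coe_length, ← coe_localLength]
  rfl

lemma exists_moduleLength_eq_mul_iff {R : Type} [CommRing R] (p : Ideal R) [p.IsPrime]
    [IsArtinianRing (Localization p.primeCompl)] (M : Type) [AddCommGroup M] [Module R M]
    [Module.Finite R M] (r : ℚ) :
    (∃ a b : ℕ,
      moduleLength (Localization p.primeCompl) (LocalizedModule p.primeCompl M) =
        (a : WithBot (WithTop ℕ)) ∧
      moduleLength (Localization p.primeCompl) (Localization p.primeCompl) =
        (b : WithBot (WithTop ℕ)) ∧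
      (a : ℚ) = r * (b : ℚ)) ↔
      (localLength p M : ℚ) = r * localLength p R := by
  have length_self : moduleLength (Localization p.primeCompl) (Localization p.primeCompl) =
      (localLength p R : WithBot (WithTop ℕ)) := moduleLength_localizedModule p R
  simp only [moduleLength_localizedModule, length_self, Nat.cast_inj, exists_and_left,
    exists_eq_left']

section LocalLengthHom

variable {R : Type} [CommRing R]

/-- The homomorphism `G(R) → ℤ` sending `[M]` to the length of `M_p`, for a prime `p` at which the
localization of `R` is Artinian. -/
noncomputable def localLengthHom (p : Ideal R) [p.IsPrime]
    [IsArtinianRing (Localization p.primeCompl)] : GGroup R →+ ℤ :=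
  GGroup.lift (fun M ↦ (localLength p M.1 : ℤ)) fun A B C _ _ hf hg h ↦ by
    have := A.2; have := B.2; have := C.2
    exact_mod_cast localLength_eq_add_of_exact p hf hg h

lemma localLengthHom_gclass (p : Ideal R) [p.IsPrime] [IsArtinianRing (Localization p.primeCompl)]
    (M : Type) [AddCommGroup M] [Module R M] [Module.Finite R M] :
    localLengthHom p (gclass R M) = localLength p M :=
  GGroup.lift_gclass _ _ _

instance (p : minimalPrimes R) : p.1.IsPrime := p.2.1.1

variable [IsNoetherianRing R]

instance (p : minimalPrimes R) : IsArtinianRing (Localization p.1.primeCompl) :=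
  isArtinianRing_localization_of_mem_minimalPrimes p.1 p.2

lemma localLengthHom_gclass_quotient_prime [DecidableEq (Ideal R)] (p : minimalPrimes R)
    (q : Ideal R) [q.IsPrime] : localLengthHom p.1 (gclass R (R ⧸ q)) = if q = p then 1 else 0 := by
  rw [localLengthHom_gclass]
  split_ifs with hqp
  · subst hqp
    rw [localLength_quotient_self, Nat.cast_one]
  · have not_le : ¬ q ≤ p := fun hle ↦ hqp (hle.antisymm (p.2.2 ⟨‹_›, bot_le⟩ hle))
    rw [localLength_quotient_eq_zero _ not_le, Nat.cast_zero]

lemma sub_sum_localLengthHom_smul_mem_closure [Fintype (minimalPrimes R)] (z : GGroup R) :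
    z - ∑ p : minimalPrimes R, localLengthHom p.1 z • gclass R (R ⧸ p.1) ∈
      AddSubgroup.closure ((fun q : PrimeSpectrum R ↦ gclass R (R ⧸ q.asIdeal)) ''
        {q | q.asIdeal ∉ minimalPrimes R}) := by
  classical
  have hz : z ∈ AddSubgroup.closure
      (Set.range fun q : PrimeSpectrum R ↦ gclass R (R ⧸ q.asIdeal)) := by
    rw [GGroup.closure_range_gclass_quotient_prime]
    exact AddSubgroup.mem_top z
  induction hz using AddSubgroup.closure_induction with
  | mem _ hx =>
    obtain ⟨q, rfl⟩ := hx
    simp only [localLengthHom_gclass_quotient_prime, ite_smul, one_smul, zero_smul]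
    by_cases hq : q.asIdeal ∈ minimalPrimes R
    · rw [Finset.sum_eq_single ⟨q.asIdeal, hq⟩ (fun p _ hp ↦ if_neg fun h ↦ hp (Subtype.ext h.symm))
        (by simp), if_pos rfl, sub_self]
      exact zero_mem _
    · rw [Finset.sum_eq_zero fun p _ ↦ if_neg fun h : q.asIdeal = p.1 ↦ hq (h ▸ p.2), sub_zero]
      exact AddSubgroup.subset_closure ⟨q, hq, rfl⟩
  | zero => simp
  | add x y _ _ hx hy =>
    simpa only [map_add, add_smul, Finset.sum_add_distrib, add_sub_add_comm] using add_mem hx hy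
  | neg x _ hx =>
    simpa only [map_neg, neg_smul, Finset.sum_neg_distrib, neg_sub, sub_neg_eq_add, neg_add_eq_sub]
      using neg_mem hx

end LocalLengthHom

section OneDimensionalLocalRing

variable {R : Type} [CommRing R] [IsLocalRing R]

lemma gclass_eq_length_smul {N : Type} [AddCommGroup N] [Module R N] [hfin : Module.Finite R N]
    (hN : IsFiniteLength R N) :
    gclass R N = (Module.length R N).toNat • gclass R (R ⧸ maximalIdeal R) := by
  revert hfin
  induction hN with
  | of_subsingleton =>
    intro _
    simp [gclass_of_subsingleton]
  | @of_simple_quotient M _ _ N hsimple hN ih =>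
    intro _
    have : IsNoetherian R N := (isFiniteLength_iff_isNoetherian_isArtinian.1 hN).1
    obtain ⟨I, hI, ⟨e⟩⟩ := isSimpleModule_iff_quot_maximal.1 hsimple
    obtain rfl := IsLocalRing.eq_maximalIdeal hI
    have length_eq : (Module.length R M).toNat = (Module.length R N).toNat + 1 := by
      rw [Module.length_eq_add_of_exact N.subtype N.mkQ N.injective_subtype N.mkQ_surjective
        (LinearMap.exact_subtype_mkQ N), Module.length_eq_one R (M ⧸ N),
        ENat.toNat_add (Module.length_ne_top_iff.2 hN) ENat.one_ne_top, ENat.toNat_one]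
    rw [gclass_eq_add_quotient N, ih, gclass_congr e, length_eq, succ_nsmul]

variable [Ring.KrullDimLE 1 R]

lemma mem_minimalPrimes_or_eq_maximalIdeal (p : Ideal R) [p.IsPrime] :
    p ∈ minimalPrimes R ∨ p = maximalIdeal R :=
  (Ring.krullDimLE_one_iff.1 ‹_› p ‹_›).imp_right IsLocalRing.eq_maximalIdeal

variable [IsNoetherianRing R]

lemma isOfFinAddOrder_gclass_quotient_maximalIdeal
    (hCM : ∃ x ∈ maximalIdeal R, x ∈ nonZeroDivisors R) :
    IsOfFinAddOrder (gclass R (R ⧸ maximalIdeal R)) := by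
  obtain ⟨x, hxm, hx⟩ := hCM
  have hlen := isFiniteLength_quotient_span_singleton R hx
  have : Nontrivial (R ⧸ Ideal.span {x}) := by
    rwa [Ideal.Quotient.nontrivial_iff, Ne, Ideal.span_singleton_eq_top]
  refine isOfFinAddOrder_iff_nsmul_eq_zero.2 ⟨(Module.length R (R ⧸ Ideal.span {x})).toNat,
    ENat.toNat_pos Module.length_pos.ne' (Module.length_ne_top_iff.2 hlen), ?_⟩
  have mul_injective : Function.Injective (LinearMap.toSpanSingleton R R x) :=
    fun _ _ h ↦ (mul_cancel_right_mem_nonZeroDivisors hx).1 h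
  rw [← gclass_eq_length_smul hlen]
  have := gclass_quotient_range_eq_zero mul_injective
  rwa [LinearMap.range_toSpanSingleton] at this

lemma associatedPrimes_self_eq_minimalPrimes
    (hCM : ∃ x ∈ maximalIdeal R, x ∈ nonZeroDivisors R) :
    associatedPrimes R R = minimalPrimes R := by
  refine Set.Subset.antisymm (fun p hp ↦ ?_) ?_
  · have := hp.1
    refine (mem_minimalPrimes_or_eq_maximalIdeal p).resolve_right ?_
    rintro rfl
    obtain ⟨x, hxm, hx⟩ := hCM
    have : x ∈ (nonZeroDivisors R : Set R)ᶜ :=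
      biUnion_associatedPrimes_eq_compl_nonZeroDivisors R ▸ Set.mem_biUnion hp hxm
    exact this hx
  · have := Module.associatedPrimes.minimalPrimes_annihilator_subset_associatedPrimes R R
    rwa [Module.annihilator_eq_bot.2 inferInstance] at this

theorem isOfFinAddOrder_iff_localLengthHom_eq_zero
    (hCM : ∃ x ∈ maximalIdeal R, x ∈ nonZeroDivisors R) (z : GGroup R) :
    IsOfFinAddOrder z ↔ ∀ p : minimalPrimes R, localLengthHom p.1 z = 0 := by
  refine ⟨fun hz p ↦ ?_, fun hz ↦ ?_⟩
  · exact (isOfFinAddOrder_iff_eq_zero _).1 ((localLengthHom p.1).isOfFinAddOrder hz)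
  · have := (minimalPrimes.finite_of_isNoetherianRing R).fintype
    have hmem := sub_sum_localLengthHom_smul_mem_closure z
    simp only [hz, zero_smul, Finset.sum_const_zero, sub_zero] at hmem
    suffices AddSubgroup.closure _ ≤ AddCommGroup.torsion (GGroup R) from this hmem
    rw [AddSubgroup.closure_le]
    rintro _ ⟨q, hq, rfl⟩
    obtain rfl : q = closedPoint R :=
      PrimeSpectrum.ext ((mem_minimalPrimes_or_eq_maximalIdeal q.asIdeal).resolve_left hq)
    exact isOfFinAddOrder_gclass_quotient_maximalIdeal hCM

theorem gbarQClass_eq_zero_iff_exists_localLength_eq_mul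
    (hCM : ∃ x ∈ maximalIdeal R, x ∈ nonZeroDivisors R)
    (M : Type) [AddCommGroup M] [Module R M] [Module.Finite R M] :
    gbarQClass R M = 0 ↔
      ∃ r : ℚ, ∀ p : minimalPrimes R, (localLength p.1 M : ℚ) = r * localLength p.1 R := by
  rw [gbarQClass_eq_zero_iff, ← exists_nat_mul_eq_int_mul_iff_exists_rat]
  simp only [isOfFinAddOrder_iff_localLengthHom_eq_zero hCM, map_sub, map_nsmul, map_zsmul,
    localLengthHom_gclass, nsmul_eq_mul, zsmul_eq_mul, sub_eq_zero, Int.cast_id]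

end OneDimensionalLocalRing

/-- over a one-dimensional Cohen-Macaulay local ring `R` with associated
primes `p₁, …, pₙ`, a finitely generated module `M` has zero class in the reduced
rationalized Grothendieck group iff there is a rational number `r` with
`length(M_p) = r · length(R_p)` for every associated prime `p`. -/
theorem stmt_11 (R : Type) [CommRing R] [IsNoetherianRing R] [IsLocalRing R]
    (hdim : ringKrullDim R = 1)
    -- Cohen-Macaulayness: the maximal ideal contains a non zero-divisor
    (hCM : ∃ x ∈ maximalIdeal R, x ∈ nonZeroDivisors R)
    (M : Type) [AddCommGroup M] [Module R M] [Module.Finite R M] :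
    gbarQClass R M = 0 ↔
    ∃ r : ℚ, ∀ (p : Ideal R) (hp : p ∈ associatedPrimes R R),
      haveI : p.IsPrime := hp.1
      ∃ a b : ℕ,
        moduleLength (Localization p.primeCompl) (LocalizedModule p.primeCompl M) =
          (a : WithBot (WithTop ℕ)) ∧
        moduleLength (Localization p.primeCompl) (Localization p.primeCompl) =
          (b : WithBot (WithTop ℕ)) ∧
        (a : ℚ) = r * (b : ℚ) := by
  have : Ring.KrullDimLE 1 R := Ring.krullDimLE_iff.2 hdim.le
  rw [gbarQClass_eq_zero_iff_exists_localLength_eq_mul hCM]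
  refine exists_congr fun r ↦ ⟨fun h p hp ↦ ?_, fun h p ↦ ?_⟩
  · have : p.IsPrime := hp.1
    have hmin : p ∈ minimalPrimes R := by rwa [← associatedPrimes_self_eq_minimalPrimes hCM]
    have := isArtinianRing_localization_of_mem_minimalPrimes p hmin
    exact (exists_moduleLength_eq_mul_iff p M r).2 (h ⟨p, hmin⟩)
  · have hass : p.1 ∈ associatedPrimes R R := by
      rw [associatedPrimes_self_eq_minimalPrimes hCM]
      exact p.2
    exact (exists_moduleLength_eq_mul_iff p.1 M r).1 (h p.1 hass)
end
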